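/- arXiv:1405.1795 — 4 statements merged into one kernel-verified Lean document; each statement's English description precedes it below -/
import Mathlib

section
/- Let N be a nilpotent-independent (NI) subset of M(d,q). Then, as an identity of real numbers, |N|/|GL(d,q)| = \sum_{i=0}^{d} (q^{-(d-i)}/\omega(d-i,q)) \cdot (|N_i|/|GL(i,q)|), where |GL(0,q)| = 1. -/
open Matrix Finset

/-- `Vinv X` : the "invertible part" subspace, `range (X^d)`. -/
noncomputable def Vinv {F : Type*} [Field F] {d : ℕ} (X : Matrix (Fin d) (Fin d) F) :
    Submodule F (Fin d → F) :=
  LinearMap.range (X.mulVecLin ^ d)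

noncomputable def Vnil {F : Type*} [Field F] {d : ℕ} (X : Matrix (Fin d) (Fin d) F) :
    Submodule F (Fin d → F) :=
  LinearMap.ker (X.mulVecLin ^ d)

open Classical in
/-- The projection of `F^d` onto `Vinv X` with kernel `Vnil X`. -/
noncomputable def fittingProj {F : Type*} [Field F] {d : ℕ} (X : Matrix (Fin d) (Fin d) F) :
    (Fin d → F) →ₗ[F] (Fin d → F) :=
  if h : IsCompl (Vinv X) (Vnil X) then
    (Vinv X).subtype ∘ₗ Submodule.linearProjOfIsCompl (Vinv X) (Vnil X) h
  else 0

/-- `N` is a nilpotent-independent subset of `M(d,q)`. -/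
def IsNI {F : Type*} [Field F] {d : ℕ} (N : Set (Matrix (Fin d) (Fin d) F)) : Prop :=
  (∀ X ∈ N, ∀ g : GL (Fin d) F, (↑g⁻¹ : Matrix (Fin d) (Fin d) F) * X * (↑g : Matrix (Fin d) (Fin d) F) ∈ N) ∧
  (∀ X : Matrix (Fin d) (Fin d) F,
    X ∈ N ↔ LinearMap.toMatrix' (X.mulVecLin ∘ₗ fittingProj X) ∈ N)

/-- the block-diagonal matrix `diag(Y, 0)` of size `d`, for `Y` of size `i ≤ d`. -/
def embedBlock {F : Type*} [Field F] (d : ℕ) {i : ℕ} (Y : Matrix (Fin i) (Fin i) F) :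
    Matrix (Fin d) (Fin d) F :=
  Matrix.of fun r c =>
    if h : (r : ℕ) < i ∧ (c : ℕ) < i then Y ⟨r, h.1⟩ ⟨c, h.2⟩ else 0

/-- `N_i`, the invertible matrices of size `i` whose block-diagonal extension lies in `N`. -/
def NIsub {F : Type*} [Field F] {d : ℕ} (N : Set (Matrix (Fin d) (Fin d) F)) (i : ℕ) :
    Set (GL (Fin i) F) :=
  {Y : GL (Fin i) F | embedBlock d (↑Y : Matrix (Fin i) (Fin i) F) ∈ N}

/-- `ω(j,q) = ∏_{k=1}^j (1 - q^{-k})`. -/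
noncomputable def omegaqd (j q : ℕ) : ℝ :=
  ∏ k ∈ Finset.Icc 1 j, (1 - ((q : ℝ))⁻¹ ^ k)


/-- block diagonal matrix along an equivalence -/
def blkD {F a b m : Type*} [Field F] (e : a ⊕ b ≃ m) (Y : Matrix a a F) (Z : Matrix b b F) :
    Matrix m m F := Matrix.reindex e e (Matrix.fromBlocks Y 0 0 Z)

section blk
variable {F a b m : Type*} [Field F] [Fintype a] [Fintype b] [Fintype m]
  [DecidableEq a] [DecidableEq b] [DecidableEq m] (e : a ⊕ b ≃ m)

theorem blkD_mul (Y Y' : Matrix a a F) (Z Z' : Matrix b b F) :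
    blkD e Y Z * blkD e Y' Z' = blkD e (Y * Y') (Z * Z') := by
  simp [blkD, Matrix.submatrix_mul_equiv, Matrix.fromBlocks_multiply]

theorem blkD_one : blkD e (1 : Matrix a a F) (1 : Matrix b b F) = 1 := by
  simp [blkD]

theorem blkD_pow (Y : Matrix a a F) (Z : Matrix b b F) (k : ℕ) :
    blkD e Y Z ^ k = blkD e (Y ^ k) (Z ^ k) := by
  induction k with
  | zero => simp [blkD_one]
  | succ k ih => rw [pow_succ, ih, blkD_mul, pow_succ, pow_succ]

theorem blkD_inj {Y Y' : Matrix a a F} {Z Z' : Matrix b b F}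
    (h : blkD e Y Z = blkD e Y' Z') : Y = Y' ∧ Z = Z' := by
  have := (Matrix.reindex e e).injective h
  rw [Matrix.fromBlocks_inj] at this
  exact ⟨this.1, this.2.2.2⟩

/-- block diagonal invertible -/
def blkGL (h : GL a F) (k : GL b F) : GL m F where
  val := blkD e h.1 k.1
  inv := blkD e h⁻¹.1 k⁻¹.1
  val_inv := by rw [blkD_mul]; simp [blkD_one]
  inv_val := by rw [blkD_mul]; simp [blkD_one]

theorem intertwine_zero {a b : Type*} [Fintype a] [Fintype b] [DecidableEq a] [DecidableEq b]
    (Y : GL a F) (Z : Matrix b b F) (hZ : IsNilpotent Z) (h : Matrix a b F)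
    (hh : h * Z = Y.1 * h) : h = 0 := by
  obtain ⟨k, hk⟩ := hZ
  have key : ∀ j : ℕ, h * Z ^ j = (Y ^ j).1 * h := by
    intro j
    induction j with
    | zero => simp
    | succ j ih =>
      rw [pow_succ, ← Matrix.mul_assoc, ih, Matrix.mul_assoc, hh, ← Matrix.mul_assoc, pow_succ]
      rfl
  have h1 := key k
  rw [hk, Matrix.mul_zero] at h1
  calc h = (Y ^ k)⁻¹.1 * ((Y ^ k).1 * h) := by
        rw [← Matrix.mul_assoc, Units.inv_mul, Matrix.one_mul]
    _ = 0 := by rw [← h1, Matrix.mul_zero]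

theorem intertwine_zero' {a b : Type*} [Fintype a] [Fintype b] [DecidableEq a] [DecidableEq b]
    (Y : GL a F) (Z : Matrix b b F) (hZ : IsNilpotent Z) (h : Matrix b a F)
    (hh : h * Y.1 = Z * h) : h = 0 := by
  obtain ⟨k, hk⟩ := hZ
  have key : ∀ j : ℕ, h * (Y ^ j).1 = Z ^ j * h := by
    intro j
    induction j with
    | zero => simp
    | succ j ih =>
      rw [pow_succ', Units.val_mul, ← Matrix.mul_assoc, hh, Matrix.mul_assoc, ih,
        ← Matrix.mul_assoc, pow_succ']
  have h1 := key k
  rw [hk, Matrix.zero_mul] at h1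
  calc h = (h * (Y ^ k).1) * (Y ^ k)⁻¹.1 := by
        rw [Matrix.mul_assoc, Units.mul_inv, Matrix.mul_one]
    _ = 0 := by rw [h1, Matrix.zero_mul]

theorem intertwine (Y Y' : GL a F) (Z Z' : Matrix b b F) (hZ : IsNilpotent Z)
    (hZ' : IsNilpotent Z') (h : Matrix m m F) (hh : h * blkD e Y.1 Z = blkD e Y'.1 Z' * h) :
    ∃ h1 h2, h = blkD e h1 h2 := by
  obtain ⟨H, rfl⟩ := (Matrix.reindex e e).surjective h
  obtain ⟨A, B, C, D, rfl⟩ : ∃ A B C D, H = Matrix.fromBlocks A B C D :=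
    ⟨_, _, _, _, (Matrix.fromBlocks_toBlocks H).symm⟩
  have h3 : Matrix.fromBlocks A B C D * Matrix.fromBlocks Y.1 0 0 Z =
      Matrix.fromBlocks Y'.1 0 0 Z' * Matrix.fromBlocks A B C D := by
    apply (Matrix.reindex e e).injective
    simpa [blkD, Matrix.submatrix_mul_equiv] using hh
  rw [Matrix.fromBlocks_multiply, Matrix.fromBlocks_multiply, Matrix.fromBlocks_inj] at h3
  simp only [Matrix.mul_zero, Matrix.zero_mul, add_zero, zero_add] at h3
  obtain ⟨-, h12, h21, -⟩ := h3
  have hB := intertwine_zero Y' Z hZ B h12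
  have hC := intertwine_zero' Y Z' hZ' C h21
  subst hB hC
  exact ⟨A, D, rfl⟩

theorem intertwineGL (Y Y' : GL a F) (Z Z' : Matrix b b F) (hZ : IsNilpotent Z)
    (hZ' : IsNilpotent Z') (h : GL m F) (hh : h.1 * blkD e Y.1 Z = blkD e Y'.1 Z' * h.1) :
    ∃ h1 h2, h = blkGL e h1 h2 ∧ h1 * Y = Y' * h1 ∧ h2.1 * Z = Z' * h2.1 := by
  have hk : h⁻¹.1 * blkD e Y'.1 Z' = blkD e Y.1 Z * h⁻¹.1 := by
    calc h⁻¹.1 * blkD e Y'.1 Z' = h⁻¹.1 * (blkD e Y'.1 Z' * h.1) * h⁻¹.1 := by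
          simp only [Matrix.mul_assoc, Units.mul_inv, Matrix.mul_one]
      _ = h⁻¹.1 * (h.1 * blkD e Y.1 Z) * h⁻¹.1 := by rw [hh]
      _ = _ := by rw [← Matrix.mul_assoc h⁻¹.1, Units.inv_mul, Matrix.one_mul]
  obtain ⟨h1, h2, e1⟩ := intertwine e Y Y' Z Z' hZ hZ' h.1 hh
  obtain ⟨k1, k2, e2⟩ := intertwine e Y' Y Z' Z hZ' hZ h⁻¹.1 hk
  have m1 : h.1 * h⁻¹.1 = 1 := Units.mul_inv h
  have m2 : h⁻¹.1 * h.1 = 1 := Units.inv_mul h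
  rw [e1, e2, blkD_mul, ← blkD_one e] at m1 m2
  obtain ⟨p1, p2⟩ := blkD_inj e m1
  obtain ⟨q1, q2⟩ := blkD_inj e m2
  rw [e1, blkD_mul, blkD_mul] at hh
  obtain ⟨r1, r2⟩ := blkD_inj e hh
  refine ⟨⟨h1, k1, p1, q1⟩, ⟨h2, k2, p2, q2⟩, ?_, ?_, ?_⟩
  · exact Units.ext e1
  · exact Units.ext r1
  · exact r2

theorem blkGL_inj {h h' : GL a F} {k k' : GL b F} (hh : blkGL e h k = blkGL e h' k') :
    h = h' ∧ k = k' := by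
  have := blkD_inj e (congrArg Units.val hh)
  exact ⟨Units.ext this.1, Units.ext this.2⟩

theorem conj_nilp (k : GL b F) (Z : Matrix b b F) (hZ : IsNilpotent Z) :
    IsNilpotent (k.1 * Z * k⁻¹.1) := by
  obtain ⟨n, hn⟩ := hZ
  refine ⟨n, ?_⟩
  rw [Units.conj_pow, hn]; simp

theorem count (C : Set (Matrix m m F)) (S : Set (GL a F))
    (hC : ∀ X ∈ C, ∃ (g : GL m F) (Y : GL a F) (Z : Matrix b b F), IsNilpotent Z ∧
      X = g.1 * blkD e Y.1 Z * g⁻¹.1)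
    (hS : ∀ (g : GL m F) (Y : GL a F) (Z : Matrix b b F), IsNilpotent Z →
      (g.1 * blkD e Y.1 Z * g⁻¹.1 ∈ C ↔ Y ∈ S)) :
    Nat.card C * (Nat.card (GL a F) * Nat.card (GL b F)) =
      Nat.card (GL m F) * (Nat.card S * Nat.card {Z : Matrix b b F // IsNilpotent Z}) := by
  choose! g Y Z hZ hX using hC
  have hY : ∀ X ∈ C, ∀ h : GL a F, h * Y X * h⁻¹ ∈ S := by
    intro X hXC h
    rw [← hS (g X * (blkGL e h 1)⁻¹) _ (Z X) (hZ X hXC)]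
    convert hXC using 1
    conv_rhs => rw [hX X hXC]
    have : blkD e (h * Y X * h⁻¹).1 (Z X) =
      (blkGL e h 1).1 * blkD e (Y X).1 (Z X) * (blkGL e h 1)⁻¹.1 := by
      change _ = blkD e _ _ * _ * blkD e _ _
      rw [blkD_mul, blkD_mul]; simp
    rw [this]
    simp only [Units.val_mul, _root_.mul_inv_rev, inv_inv, Matrix.mul_assoc]
    simp only [← Matrix.mul_assoc (blkGL e h 1)⁻¹.1, Units.inv_mul, Matrix.one_mul]
  rw [← Nat.card_prod, ← Nat.card_prod, ← Nat.card_prod, ← Nat.card_prod]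
  let f : C × (GL a F × GL b F) → GL m F × (S × {Z : Matrix b b F // IsNilpotent Z}) :=
    fun p => (g p.1 * (blkGL e p.2.1 p.2.2)⁻¹, ⟨p.2.1 * Y p.1 * p.2.1⁻¹, hY _ p.1.2 _⟩,
      ⟨p.2.2.1 * Z p.1 * p.2.2⁻¹.1, conj_nilp _ _ (hZ _ p.1.2)⟩)
  let Φ : GL m F × (S × {Z : Matrix b b F // IsNilpotent Z}) → Matrix m m F :=
    fun t => t.1.1 * blkD e t.2.1.1.1 t.2.2.1 * t.1⁻¹.1
  have hΦ : ∀ p, Φ (f p) = p.1 := by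
    rintro ⟨⟨X, hXC⟩, h, k⟩
    conv_rhs => dsimp only; rw [hX X hXC]
    simp only [Φ, f]
    have : blkD e (h * Y X * h⁻¹).1 (k.1 * Z X * k⁻¹.1) =
      (blkGL e h k).1 * blkD e (Y X).1 (Z X) * (blkGL e h k)⁻¹.1 := by
      change _ = blkD e _ _ * _ * blkD e _ _
      rw [blkD_mul, blkD_mul]; simp
    rw [this]
    simp only [Units.val_mul, _root_.mul_inv_rev, inv_inv, Matrix.mul_assoc]
    simp only [← Matrix.mul_assoc (blkGL e h k)⁻¹.1, Units.inv_mul, Matrix.one_mul]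
  apply Nat.card_eq_of_bijective f
  constructor
  · rintro ⟨X, h, k⟩ ⟨X', h', k'⟩ hf
    have h1 : X = X' := by
      have := congrArg Φ hf
      rw [hΦ, hΦ] at this
      exact Subtype.ext this
    subst h1
    have h2 := congrArg Prod.fst hf
    simp only [f, mul_right_inj, _root_.inv_inj] at h2
    obtain ⟨rfl, rfl⟩ := blkGL_inj e h2
    rfl
  · rintro ⟨g', ⟨Y', hY'⟩, ⟨Z', hZ'⟩⟩
    let X := g'.1 * blkD e Y'.1 Z' * g'⁻¹.1
    have hXC : X ∈ C := (hS g' Y' Z' hZ').2 hY'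
    have h0 : (g'⁻¹ * g X).1 * blkD e (Y X).1 (Z X) = blkD e Y'.1 Z' * (g'⁻¹ * g X).1 := by
      have h1 : g'.1 * blkD e Y'.1 Z' * g'⁻¹.1 = (g X).1 * blkD e (Y X).1 (Z X) * (g X)⁻¹.1 :=
        hX X hXC
      calc (g'⁻¹ * g X).1 * blkD e (Y X).1 (Z X)
          = g'⁻¹.1 * ((g X).1 * blkD e (Y X).1 (Z X) * (g X)⁻¹.1) * (g X).1 := by
            simp only [Matrix.mul_assoc, Units.inv_mul, Matrix.mul_one, Units.val_mul]
        _ = g'⁻¹.1 * (g'.1 * blkD e Y'.1 Z' * g'⁻¹.1) * (g X).1 := by rw [h1]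
        _ = _ := by
            simp only [← Matrix.mul_assoc, Units.inv_mul, Matrix.one_mul, Units.val_mul]
    obtain ⟨h, k, hhk, e1, e2⟩ := intertwineGL e (Y X) Y' (Z X) Z' (hZ X hXC) hZ' _ h0
    refine ⟨(⟨X, hXC⟩, h, k), ?_⟩
    simp only [f]
    refine Prod.ext ?_ (Prod.ext (Subtype.ext ?_) (Subtype.ext ?_))
    · simp only [← hhk]; group
    · simp only [e1]; group
    · simp only [e2, Matrix.mul_assoc, Units.mul_inv, Matrix.mul_one]

end blk

section fit
variable {F : Type*} [Field F] {d : ℕ}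

theorem mulVecLin_pow' {m : Type*} [Fintype m] [DecidableEq m] (X : Matrix m m F) (k : ℕ) :
    X.mulVecLin ^ k = (X ^ k).mulVecLin := by
  induction k with
  | zero => simp [Module.End.one_eq_id]
  | succ k ih => rw [pow_succ, ih, pow_succ, Matrix.mulVecLin_mul]; rfl

theorem fit_isCompl (X : Matrix (Fin d) (Fin d) F) : IsCompl (Vinv X) (Vnil X) := by
  rw [Submodule.isCompl_iff_disjoint]
  · rw [Submodule.disjoint_def]
    rintro x ⟨y, rfl⟩ hx
    rw [Vnil, LinearMap.mem_ker, ← Module.End.mul_apply, ← pow_add] at hx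
    have := Module.End.ker_pow_le_ker_pow_finrank X.mulVecLin (d + d) (LinearMap.mem_ker.2 hx)
    simpa using this
  · have := LinearMap.finrank_range_add_finrank_ker (X.mulVecLin ^ d)
    exact this.ge

theorem finrank_Vinv (X : Matrix (Fin d) (Fin d) F) :
    Module.finrank F (Vinv X) = (X ^ d).rank := by
  rw [Vinv, mulVecLin_pow', Matrix.rank]

theorem nilp_pow {b : Type*} [Fintype b] [DecidableEq b] (Z : Matrix b b F) (hZ : IsNilpotent Z)
    {k : ℕ} (hk : Fintype.card b ≤ k) : Z ^ k = 0 := by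
  obtain ⟨n, hn⟩ := hZ
  have h : Z ^ Fintype.card b = 0 := by
    have h1 := Module.End.ker_pow_le_ker_pow_finrank Z.mulVecLin n
    rw [mulVecLin_pow', mulVecLin_pow', hn, Module.finrank_fintype_fun_eq_card] at h1
    have h2 : (Z ^ Fintype.card b).mulVecLin = 0 := by
      ext1 x
      ext1
      have := h1 (x := Pi.single x 1) (by simp)
      simpa using this
    ext i j
    have := congrFun (LinearMap.congr_fun h2 (Pi.single j 1)) i
    simpa using this
  exact pow_eq_zero_of_le hk h

variable {i n : ℕ} (e : Fin i ⊕ Fin n ≃ Fin d)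

theorem rank_blk (Y : GL (Fin i) F) : (blkD e Y.1 (0 : Matrix (Fin n) (Fin n) F)).rank = i := by
  classical
  have : blkD e Y.1 (0 : Matrix (Fin n) (Fin n) F) = (blkGL e Y (1 : GL (Fin n) F)).1 *
      blkD e (1 : Matrix (Fin i) (Fin i) F) (0 : Matrix (Fin n) (Fin n) F) := by
    change _ = blkD e _ _ * _
    rw [blkD_mul]; simp
  rw [this, Matrix.rank_mul_eq_right_of_isUnit_det _ _
    ((Matrix.isUnit_iff_isUnit_det _).1 (Units.isUnit _)), blkD, Matrix.rank_reindex]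
  have h2 : Matrix.fromBlocks (1 : Matrix (Fin i) (Fin i) F) 0 0 (0 : Matrix (Fin n) (Fin n) F)
      = Matrix.diagonal (Sum.elim 1 0) := by
    rw [← Matrix.diagonal_one, ← Matrix.diagonal_zero, Matrix.fromBlocks_diagonal]
    rfl
  rw [h2, Matrix.rank_diagonal, Fintype.card_eq_nat_card]
  refine Eq.trans (Nat.card_congr ?_) (Nat.card_fin i)
  refine ⟨fun x => match x with
    | ⟨Sum.inl x, _⟩ => x
    | ⟨Sum.inr x, h⟩ => absurd rfl h, fun x => ⟨Sum.inl x, by simp⟩, ?_, ?_⟩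
  · rintro ⟨x | x, h⟩
    · rfl
    · exact absurd rfl h
  · intro x; rfl

theorem rank_conj_blk (g : GL (Fin d) F) (Y : GL (Fin i) F) (Z : Matrix (Fin n) (Fin n) F)
    (hZ : IsNilpotent Z) : Module.finrank F (Vinv (g.1 * blkD e Y.1 Z * g⁻¹.1)) = i := by
  have hn : n ≤ d := by
    have := Fintype.card_congr e
    simp at this; omega
  rw [finrank_Vinv, Units.conj_pow, blkD_pow, nilp_pow Z hZ (by simpa using hn)]
  rw [Matrix.rank_mul_eq_left_of_isUnit_det _ _
    ((Matrix.isUnit_iff_isUnit_det _).1 (Units.isUnit _)),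
    Matrix.rank_mul_eq_right_of_isUnit_det _ _
    ((Matrix.isUnit_iff_isUnit_det _).1 (Units.isUnit _))]
  exact rank_blk e (Y ^ d)

theorem fittingProj_blk (Y : GL (Fin i) F) (Z : Matrix (Fin n) (Fin n) F)
    (hZ : IsNilpotent Z) : fittingProj (blkD e Y.1 Z) = (blkD e 1 0).mulVecLin := by
  have hn : n ≤ d := by
    have := Fintype.card_congr e
    simp at this; omega
  have hp : (blkD e Y.1 Z).mulVecLin ^ d = (blkD e (Y ^ d).1 0).mulVecLin := by
    rw [mulVecLin_pow', blkD_pow, nilp_pow Z hZ (by simpa using hn)]; rfl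
  have hc := fit_isCompl (blkD e Y.1 Z)
  rw [fittingProj, dif_pos hc]
  refine LinearMap.ext fun x => ?_
  -- decompose
  have hx : x = (blkD e (1 : Matrix (Fin i) (Fin i) F) (0 : Matrix (Fin n) (Fin n) F)).mulVecLin x +
      (blkD e (0 : Matrix (Fin i) (Fin i) F) (1 : Matrix (Fin n) (Fin n) F)).mulVecLin x := by
    rw [← LinearMap.add_apply, ← Matrix.mulVecLin_add]
    have : blkD e (1 : Matrix (Fin i) (Fin i) F) (0 : Matrix (Fin n) (Fin n) F) + blkD e 0 1 = 1 := by
      rw [← blkD_one e]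
      simp only [blkD, Matrix.reindex_apply]
      ext r c
      have := congrFun (congrFun (Matrix.fromBlocks_add (1 : Matrix (Fin i) (Fin i) F) 0 0
        (0 : Matrix (Fin n) (Fin n) F) 0 0 0 1) (e.symm r)) (e.symm c)
      simpa using! this
    rw [this]; simp
  have h1 : (blkD e (1 : Matrix (Fin i) (Fin i) F) (0 : Matrix (Fin n) (Fin n) F)).mulVecLin x ∈
      Vinv (blkD e Y.1 Z) := by
    rw [Vinv, hp]
    refine ⟨(blkD e (Y ^ d)⁻¹.1 0).mulVecLin x, ?_⟩
    rw [← LinearMap.comp_apply, ← Matrix.mulVecLin_mul, blkD_mul]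
    simp
  have h2 : (blkD e (0 : Matrix (Fin i) (Fin i) F) (1 : Matrix (Fin n) (Fin n) F)).mulVecLin x ∈
      Vnil (blkD e Y.1 Z) := by
    rw [Vnil, hp, LinearMap.mem_ker]
    rw [← LinearMap.comp_apply, ← Matrix.mulVecLin_mul, blkD_mul]
    simp [blkD]
  conv_lhs => rw [hx]
  rw [map_add]
  generalize (blkD e (1 : Matrix (Fin i) (Fin i) F) (0 : Matrix (Fin n) (Fin n) F)).mulVecLin x = u at *
  generalize (blkD e (0 : Matrix (Fin i) (Fin i) F) (1 : Matrix (Fin n) (Fin n) F)).mulVecLin x = v at *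
  have e1 := Submodule.projectionOnto_apply_left hc ⟨u, h1⟩
  have e2 := Submodule.projectionOnto_apply_right hc ⟨v, h2⟩
  simp only at e1 e2
  simp only [LinearMap.comp_apply, Submodule.linearProjOfIsCompl]
  rw [e1, e2]
  simp

theorem mem_iff (N : Set (Matrix (Fin d) (Fin d) F)) (hN : IsNI N) (g : GL (Fin d) F)
    (Y : GL (Fin i) F) (Z : Matrix (Fin n) (Fin n) F) (hZ : IsNilpotent Z) :
    g.1 * blkD e Y.1 Z * g⁻¹.1 ∈ N ↔ blkD e Y.1 0 ∈ N := by
  have h1 : g.1 * blkD e Y.1 Z * g⁻¹.1 ∈ N ↔ blkD e Y.1 Z ∈ N := by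
    constructor
    · intro h
      have := hN.1 _ h g
      convert this using 1
      simp only [Matrix.mul_assoc, Units.inv_mul, Matrix.mul_one]
      rw [← Matrix.mul_assoc, Units.inv_mul, Matrix.one_mul]
    · intro h
      have := hN.1 _ h g⁻¹
      simpa using this
  rw [h1, hN.2, fittingProj_blk e Y Z hZ, ← Matrix.mulVecLin_mul, blkD_mul]
  rw [← Matrix.toLin'_apply', LinearMap.toMatrix'_toLin']
  simp

theorem exists_form (X : Matrix (Fin d) (Fin d) F) (hX : Module.finrank F (Vinv X) = i) :
    ∃ (g : GL (Fin d) F) (Y : GL (Fin i) F) (Z : Matrix (Fin n) (Fin n) F), IsNilpotent Z ∧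
      X = g.1 * blkD e Y.1 Z * g⁻¹.1 := by
  have hc := fit_isCompl X
  have hnd : i + n = d := by
    have := Fintype.card_congr e
    simpa using this
  have hnil : Module.finrank F (Vnil X) = n := by
    have := LinearMap.finrank_range_add_finrank_ker (X.mulVecLin ^ d)
    change Module.finrank F (Vinv X) + Module.finrank F (Vnil X) = _ at this
    simp at this; omega
  let b1 := Module.finBasisOfFinrankEq F (Vinv X) hX
  let b2 := Module.finBasisOfFinrankEq F (Vnil X) hnil
  have hi : ∀ x ∈ Vinv X, X.mulVecLin x ∈ Vinv X := by
    rintro x ⟨y, rfl⟩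
    refine ⟨X.mulVecLin y, ?_⟩
    rw [← Module.End.mul_apply, ← Module.End.mul_apply, ← pow_succ, ← pow_succ']
  have hn : ∀ x ∈ Vnil X, X.mulVecLin x ∈ Vnil X := by
    intro x hx
    rw [Vnil, LinearMap.mem_ker] at hx ⊢
    rw [← Module.End.mul_apply, ← pow_succ, pow_succ', Module.End.mul_apply, hx, map_zero]
  let f1 := X.mulVecLin.restrict hi
  let f2 := X.mulVecLin.restrict hn
  let φ := Submodule.prodEquivOfIsCompl _ _ hc
  have hφ : ∀ p, X.mulVecLin (φ p) = φ (f1.prodMap f2 p) := by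
    rintro ⟨p1, p2⟩
    simp [φ, f1, f2, Submodule.coe_prodEquivOfIsCompl', Matrix.mulVec_add]
  let b : Module.Basis (Fin d) F (Fin d → F) := ((b1.prod b2).map φ).reindex e
  have hM : LinearMap.toMatrix b b X.mulVecLin =
      blkD e (LinearMap.toMatrix b1 b1 f1) (LinearMap.toMatrix b2 b2 f2) := by
    rw [blkD, ← LinearMap.toMatrix_prodMap]
    ext r c
    simp only [Matrix.reindex_apply, Matrix.submatrix_apply, LinearMap.toMatrix_apply, b,
      Module.Basis.reindex_apply, Module.Basis.map_apply, Module.Basis.repr_reindex_apply,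
      Module.Basis.map_repr, hφ, LinearEquiv.trans_apply, LinearEquiv.symm_apply_apply]
  have hu : Function.Injective f1 := by
    rw [injective_iff_map_eq_zero]
    rintro ⟨x, hx⟩ h0
    have h1 : X.mulVecLin x = 0 := congrArg Subtype.val h0
    have h2 : x ∈ Vnil X := by
      by_cases hd : d = 0
      · subst hd
        have : x = 0 := Subsingleton.elim _ _
        rw [this]; exact zero_mem _
      · rw [Vnil, LinearMap.mem_ker]
        obtain ⟨k, rfl⟩ := Nat.exists_eq_succ_of_ne_zero hd
        rw [pow_succ, Module.End.mul_apply, h1, map_zero]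
    exact Subtype.ext (Submodule.disjoint_def.1 hc.disjoint x hx h2)
  have hU : IsUnit (LinearMap.toMatrix b1 b1 f1) := by
    have : IsUnit f1 := (LinearMap.isUnit_iff_ker_eq_bot f1).2 (LinearMap.ker_eq_bot.2 hu)
    exact this.map (LinearMap.toMatrixAlgEquiv b1)
  obtain ⟨Y, hY⟩ := hU
  have hN : IsNilpotent (LinearMap.toMatrix b2 b2 f2) := by
    rw [LinearMap.isNilpotent_toMatrix_iff]
    refine ⟨d, ?_⟩
    refine LinearMap.ext fun x => Subtype.ext ?_
    rw [Module.End.pow_restrict]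
    exact LinearMap.mem_ker.1 x.2
  let s := Pi.basisFun F (Fin d)
  refine ⟨⟨s.toMatrix b, b.toMatrix s, ?_, ?_⟩, Y, _, hN, ?_⟩
  · exact s.toMatrix_mul_toMatrix_flip b
  · exact b.toMatrix_mul_toMatrix_flip s
  · rw [hY, ← hM]
    change X = s.toMatrix b * _ * b.toMatrix s
    rw [basis_toMatrix_mul_linearMap_toMatrix_mul_basis_toMatrix]
    exact (LinearMap.toMatrix'_toLin' X).symm
end fit

section final
variable {F : Type*} [Field F]

/-- the standard splitting of `Fin d` -/
def splitEquiv {d i : ℕ} (h : i ≤ d) : Fin i ⊕ Fin (d - i) ≃ Fin d :=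
  finSumFinEquiv.trans (finCongr (by omega))

theorem embedBlock_eq {d i : ℕ} (h : i ≤ d) (Y : Matrix (Fin i) (Fin i) F) :
    embedBlock d Y = blkD (splitEquiv h) Y 0 := by
  have : Matrix.reindex (splitEquiv h).symm (splitEquiv h).symm (embedBlock d Y) =
      Matrix.fromBlocks Y 0 0 0 := by
    ext (r | r) (c | c) <;> simp [embedBlock, splitEquiv]
  rw [blkD, ← this]
  simp

theorem card_level {d i : ℕ} (h : i ≤ d) (N : Set (Matrix (Fin d) (Fin d) F)) (hN : IsNI N) :
    Nat.card {X : Matrix (Fin d) (Fin d) F | X ∈ N ∧ Module.finrank F (Vinv X) = i} *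
      (Nat.card (GL (Fin i) F) * Nat.card (GL (Fin (d - i)) F)) =
    Nat.card (GL (Fin d) F) * (Nat.card (NIsub N i) *
      Nat.card {Z : Matrix (Fin (d - i)) (Fin (d - i)) F // IsNilpotent Z}) := by
  apply count (splitEquiv h)
  · rintro X ⟨-, hX⟩
    exact exists_form _ X hX
  · intro g Y Z hZ
    rw [Set.mem_setOf_eq, mem_iff _ N hN g Y Z hZ, rank_conj_blk _ g Y Z hZ, NIsub,
      Set.mem_setOf_eq, embedBlock_eq h]
    simp

theorem card_sum [Fintype F] {d : ℕ} (N : Set (Matrix (Fin d) (Fin d) F)) :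
    Nat.card N = ∑ i ∈ Finset.range (d + 1),
      Nat.card {X : Matrix (Fin d) (Fin d) F | X ∈ N ∧ Module.finrank F (Vinv X) = i} := by
  classical
  have h := Finset.card_eq_sum_card_fiberwise (s := Finset.univ.filter (· ∈ N))
    (t := Finset.range (d + 1)) (f := fun X : Matrix (Fin d) (Fin d) F => Module.finrank F (Vinv X))
    (by
      intro X _
      have := Submodule.finrank_le (Vinv X)
      simp at this
      simp; omega)
  rw [Nat.card_eq_fintype_card, Fintype.card_subtype, h]
  refine Finset.sum_congr rfl fun i _ => ?_
  rw [Nat.card_eq_fintype_card, Fintype.card_subtype, Finset.filter_filter]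
  rfl

/-- proportion of nilpotents -/
noncomputable def nilA (F : Type*) [Field F] (n : ℕ) : ℝ :=
  (Nat.card {Z : Matrix (Fin n) (Fin n) F // IsNilpotent Z} : ℝ) / Nat.card (GL (Fin n) F)

theorem main_sum [Fintype F] {d : ℕ} (N : Set (Matrix (Fin d) (Fin d) F)) (hN : IsNI N) :
    (Nat.card N : ℝ) / Nat.card (GL (Fin d) F) = ∑ i ∈ Finset.range (d + 1), nilA F (d - i) *
      ((Nat.card (NIsub N i) : ℝ) / Nat.card (GL (Fin i) F)) := by
  have hpos : ∀ n, (Nat.card (GL (Fin n) F) : ℝ) ≠ 0 := fun n =>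
    Nat.cast_ne_zero.2 Nat.card_pos.ne'
  rw [card_sum, Nat.cast_sum, Finset.sum_div]
  refine Finset.sum_congr rfl fun i hi => ?_
  have h := card_level (Nat.lt_succ_iff.1 (Finset.mem_range.1 hi)) N hN
  have h' := congrArg (Nat.cast : ℕ → ℝ) h
  push_cast at h'
  have h1 := hpos d
  have h2 := hpos i
  have h3 := hpos (d - i)
  rw [nilA, div_mul_div_comm, div_eq_div_iff h1 (mul_ne_zero h3 h2)]
  linear_combination h'

theorem isNI_univ {d : ℕ} : IsNI (Set.univ : Set (Matrix (Fin d) (Fin d) F)) := by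
  simp [IsNI]

theorem card_GL_omega [Fintype F] (n : ℕ) :
    (Nat.card (GL (Fin n) F) : ℝ) =
      (Fintype.card F : ℝ) ^ (n * n) * omegaqd n (Fintype.card F) := by
  have hq : (Fintype.card F : ℝ) ≠ 0 := by simp
  have h1 : (1 : ℝ) < Fintype.card F := by exact_mod_cast Fintype.one_lt_card
  rw [Matrix.card_GL_field, Fin.prod_univ_eq_prod_range
    (fun i => Fintype.card F ^ n - Fintype.card F ^ i) n, omegaqd,
    ← Finset.prod_range_reflect, Nat.cast_prod, pow_mul,
    ← Finset.Ico_add_one_right_eq_Icc, Finset.prod_Ico_eq_prod_range]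
  have : ((Fintype.card F : ℝ) ^ n) ^ n = ∏ _k ∈ Finset.range n, (Fintype.card F : ℝ) ^ n := by
    simp
  rw [this, Nat.add_sub_cancel, ← Finset.prod_mul_distrib]
  refine Finset.prod_congr rfl fun k hk => ?_
  have hk := Finset.mem_range.1 hk
  rw [Nat.cast_sub (Nat.pow_le_pow_right Fintype.card_pos (by omega))]
  rw [add_comm 1 k]
  push_cast
  obtain ⟨j, rfl⟩ : ∃ j, n = j + (k + 1) := ⟨n - (k + 1), by omega⟩
  have : j + (k + 1) - 1 - k = j := by omega
  rw [this, mul_sub, mul_one, pow_add, mul_assoc, ← mul_pow, mul_inv_cancel₀ hq, one_pow, mul_one]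

theorem nilA_eq [Fintype F] (n : ℕ) :
    nilA F n = ((Fintype.card F : ℝ))⁻¹ ^ n / omegaqd n (Fintype.card F) := by
  have hq : (1 : ℝ) < Fintype.card F := by exact_mod_cast Fintype.one_lt_card
  have hpos : ∀ n, (Nat.card (GL (Fin n) F) : ℝ) ≠ 0 := fun n =>
    Nat.cast_ne_zero.2 Nat.card_pos.ne'
  have hw : ∀ n, omegaqd n (Fintype.card F) ≠ 0 := fun n h => by
    apply hpos n
    rw [card_GL_omega, h, mul_zero]
  have key : ∀ d, (omegaqd d (Fintype.card F))⁻¹ = ∑ i ∈ Finset.range (d + 1), nilA F i := by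
    intro d
    have h := main_sum (F := F) (d := d) Set.univ isNI_univ
    rw [← Finset.sum_flip]
    convert h using 1
    · have hM : Nat.card (Matrix (Fin d) (Fin d) F) = Fintype.card F ^ (d * d) := by
        change Nat.card (Fin d → Fin d → F) = _
        simp [pow_mul]
      rw [card_GL_omega, Nat.card_congr (Equiv.Set.univ _), hM]
      have := hw d
      have : (Fintype.card F : ℝ) ≠ 0 := by positivity
      push_cast
      field_simp
    · refine Finset.sum_congr rfl fun i _ => ?_
      have : NIsub (Set.univ : Set (Matrix (Fin d) (Fin d) F)) i = Set.univ := by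
        ext; simp [NIsub]
      rw [this, Nat.card_congr (Equiv.Set.univ _), div_self (hpos i), mul_one]
  cases n with
  | zero =>
    have := key 0
    simp at this
    rw [← this]; simp
  | succ n =>
    have h1 := key (n + 1)
    rw [Finset.sum_range_succ, ← key n] at h1
    have h2 : omegaqd (n + 1) (Fintype.card F) = omegaqd n (Fintype.card F) *
      (1 - (Fintype.card F : ℝ)⁻¹ ^ (n + 1)) := by
      rw [omegaqd, Finset.prod_Icc_succ_top (by omega)]; rfl
    have h3 := hw (n + 1)
    have h4 := hw n
    have h5 : nilA F (n + 1) = (omegaqd (n + 1) (Fintype.card F))⁻¹ -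
      (omegaqd n (Fintype.card F))⁻¹ := by linarith
    rw [h5, eq_div_iff h3, sub_mul, inv_mul_cancel₀ h3]
    rw [h2, ← mul_assoc, inv_mul_cancel₀ h4]
    ring
end final

theorem stmt0 (q d : ℕ) (hq : IsPrimePow q) (hd : 0 < d)
    (F : Type*) [Field F] [Fintype F] (hF : Fintype.card F = q)
    (N : Set (Matrix (Fin d) (Fin d) F)) (hN : IsNI N) :
    (Nat.card N : ℝ) / Nat.card (GL (Fin d) F) =
      ∑ i ∈ Finset.range (d + 1),
        ((q : ℝ))⁻¹ ^ (d - i) / omegaqd (d - i) q *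
          ((Nat.card (NIsub N i) : ℝ) / Nat.card (GL (Fin i) F)) := by
  subst hF
  rw [main_sum N hN]
  refine Finset.sum_congr rfl fun i _ => ?_
  rw [nilA_eq]
end

section
/- Let N be a nilpotent-independent (NI) subset of M(d,q) and let 0 \le i \le d. Then |N(i)| = s_i \cdot q^{(d-i)(d-1)} \cdot |N_i|, where s_i is the number of i-dimensional subspaces of \mathbb{F}_q^d. -/
open Matrix Finset

namespace NIaux

variable {F : Type*} [Field F]

lemma mulVecLin_pow' {n : ℕ} (X : Matrix (Fin n) (Fin n) F) (k : ℕ) :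
    X.mulVecLin ^ k = (X ^ k).mulVecLin := by
  induction k with
  | zero => ext; simp
  | succ k ih => rw [pow_succ, pow_succ, ih, Matrix.mulVecLin_mul]; rfl

lemma mem_Vinv {d : ℕ} (X : Matrix (Fin d) (Fin d) F) (v : Fin d → F) :
    v ∈ Vinv X ↔ ∃ w, (X ^ d) *ᵥ w = v := by
  simp [Vinv, mulVecLin_pow']

lemma mem_Vnil {d : ℕ} (X : Matrix (Fin d) (Fin d) F) (v : Fin d → F) :
    v ∈ Vnil X ↔ (X ^ d) *ᵥ v = 0 := by
  simp [Vnil, mulVecLin_pow']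

lemma pow_mulVec_eq_zero {n : ℕ} (X : Matrix (Fin n) (Fin n) F) (k : ℕ) (hk : n ≤ k)
    (v : Fin n → F) (h : (X ^ k) *ᵥ v = 0) : (X ^ n) *ᵥ v = 0 := by
  have := Module.End.ker_pow_eq_ker_pow_finrank_of_le (f := X.mulVecLin) (m := k) (by simpa using hk)
  have h2 : v ∈ LinearMap.ker (X.mulVecLin ^ k) := by simpa [mulVecLin_pow'] using h
  rw [this] at h2
  simpa [mulVecLin_pow'] using h2

lemma pow_eq_zero_of_nilp {n : ℕ} (X : Matrix (Fin n) (Fin n) F) (h : IsNilpotent X) (k : ℕ)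
    (hk : n ≤ k) : X ^ k = 0 := by
  obtain ⟨r, hr⟩ := h
  have h0 : X ^ n = 0 := by
    apply Matrix.mulVec_injective
    ext1 v
    rw [Matrix.zero_mulVec]
    apply pow_mulVec_eq_zero X (r + n) (by omega)
    rw [pow_add, hr]; simp
  rw [← Nat.sub_add_cancel hk, pow_add, h0, mul_zero]

lemma disj {d : ℕ} (X : Matrix (Fin d) (Fin d) F) (v : Fin d → F)
    (h1 : v ∈ Vinv X) (h2 : (X ^ d) *ᵥ v = 0) : v = 0 := by
  obtain ⟨w, rfl⟩ := (mem_Vinv X v).1 h1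
  rw [Matrix.mulVec_mulVec, ← pow_add] at h2
  exact pow_mulVec_eq_zero X (d + d) (by omega) w h2

lemma isCompl_fit {d : ℕ} (X : Matrix (Fin d) (Fin d) F) : IsCompl (Vinv X) (Vnil X) := by
  rw [Submodule.isCompl_iff_disjoint]
  · rw [Submodule.disjoint_def]
    intro x h1 h2
    exact disj X x h1 ((mem_Vnil X x).1 h2)
  · rw [Vinv, Vnil, LinearMap.finrank_range_add_finrank_ker]

lemma fittingProj_eq {d : ℕ} (X : Matrix (Fin d) (Fin d) F) (P : (Fin d → F) →ₗ[F] (Fin d → F))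
    (h1 : ∀ x, P x ∈ Vinv X) (h2 : ∀ x, x - P x ∈ Vnil X) : fittingProj X = P := by
  ext1 j
  apply LinearMap.ext_ring
  generalize hx : (LinearMap.single F (fun _ : Fin d => F) j) 1 = x
  simp only [LinearMap.comp_apply, hx]
  rw [fittingProj, dif_pos (isCompl_fit X)]
  have e : x = P x + (x - P x) := by abel
  conv_lhs => rw [e]
  rw [map_add]
  have a := Submodule.projectionOnto_apply_left (isCompl_fit X) ⟨P x, h1 x⟩
  have b := Submodule.projectionOnto_apply_right (isCompl_fit X) ⟨_, h2 x⟩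
  rw [LinearMap.comp_apply, LinearMap.comp_apply]
  erw [a, b]
  simp

/-- block upper triangular matrix -/
def T {i m : ℕ} (A : Matrix (Fin i) (Fin i) F) (B : Matrix (Fin i) (Fin m) F)
    (C : Matrix (Fin m) (Fin m) F) : Matrix (Fin (i + m)) (Fin (i + m)) F :=
  (fromBlocks A B 0 C).submatrix finSumFinEquiv.symm finSumFinEquiv.symm

/-- standard subspace -/
def W0 (F : Type*) [Field F] (i m : ℕ) : Submodule F (Fin (i + m) → F) where
  carrier := {v | ∀ j : Fin m, v (Fin.natAdd i j) = 0}
  add_mem' := by intro a b ha hb j; simp [ha j, hb j]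
  zero_mem' := by intro j; simp
  smul_mem' := by intro c a ha j; simp [ha j]

lemma T_mul {i m : ℕ} (A A' : Matrix (Fin i) (Fin i) F) (B B' : Matrix (Fin i) (Fin m) F)
    (C C' : Matrix (Fin m) (Fin m) F) :
    T A B C * T A' B' C' = T (A * A') (A * B' + B * C') (C * C') := by
  simp [T, Matrix.submatrix_mul_equiv, Matrix.fromBlocks_multiply]

lemma T_one {i m : ℕ} : T (1 : Matrix (Fin i) (Fin i) F) 0 (1 : Matrix (Fin m) (Fin m) F) = 1 := by
  simp [T]

lemma T_pow {i m : ℕ} (A : Matrix (Fin i) (Fin i) F) (B : Matrix (Fin i) (Fin m) F)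
    (C : Matrix (Fin m) (Fin m) F) (k : ℕ) : ∃ B', (T A B C) ^ k = T (A ^ k) B' (C ^ k) := by
  induction k with
  | zero => exact ⟨0, by simp [T_one]⟩
  | succ k ih =>
    obtain ⟨B', h⟩ := ih
    exact ⟨_, by rw [pow_succ, h, T_mul, pow_succ, pow_succ]⟩

lemma T_inj {i m : ℕ} {A A' : Matrix (Fin i) (Fin i) F} {B B' : Matrix (Fin i) (Fin m) F}
    {C C' : Matrix (Fin m) (Fin m) F} (h : T A B C = T A' B' C') : A = A' ∧ B = B' ∧ C = C' := by
  have h2 : fromBlocks A B 0 C = fromBlocks A' B' 0 C' := by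
    have := congrArg (fun M => Matrix.submatrix M finSumFinEquiv finSumFinEquiv) h
    simpa [T] using this
  rw [Matrix.fromBlocks_inj] at h2
  exact ⟨h2.1, h2.2.1, h2.2.2.2⟩

lemma T_castAdd {i m : ℕ} (A : Matrix (Fin i) (Fin i) F) (B : Matrix (Fin i) (Fin m) F)
    (C : Matrix (Fin m) (Fin m) F) (v : Fin (i + m) → F) :
    (T A B C *ᵥ v) ∘ Fin.castAdd m = A *ᵥ (v ∘ Fin.castAdd m) + B *ᵥ (v ∘ Fin.natAdd i) := by
  ext j
  rw [T, Matrix.submatrix_mulVec_equiv, Matrix.fromBlocks_mulVec]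
  simp [Function.comp_def]

lemma T_natAdd {i m : ℕ} (A : Matrix (Fin i) (Fin i) F) (B : Matrix (Fin i) (Fin m) F)
    (C : Matrix (Fin m) (Fin m) F) (v : Fin (i + m) → F) :
    (T A B C *ᵥ v) ∘ Fin.natAdd i = C *ᵥ (v ∘ Fin.natAdd i) := by
  ext j
  rw [T, Matrix.submatrix_mulVec_equiv, Matrix.fromBlocks_mulVec]
  simp [Function.comp_def]

lemma vec_ext {i m : ℕ} {v w : Fin (i + m) → F} (h1 : v ∘ Fin.castAdd m = w ∘ Fin.castAdd m)
    (h2 : v ∘ Fin.natAdd i = w ∘ Fin.natAdd i) : v = w := by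
  ext j
  refine Fin.addCases (fun a => ?_) (fun a => ?_) j
  · exact congrFun h1 a
  · exact congrFun h2 a

lemma mem_W0 {i m : ℕ} (v : Fin (i + m) → F) : v ∈ W0 F i m ↔ v ∘ Fin.natAdd i = 0 := by
  constructor
  · intro h; ext j; exact h j
  · intro h j; exact congrFun h j

lemma append_cast {i m : ℕ} (a : Fin i → F) (b : Fin m → F) :
    Fin.append a b ∘ Fin.castAdd m = a := by ext; simp
lemma append_nat {i m : ℕ} (a : Fin i → F) (b : Fin m → F) :
    Fin.append a b ∘ Fin.natAdd i = b := by ext; simp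

lemma embed_eq {i m : ℕ} (A : Matrix (Fin i) (Fin i) F) :
    embedBlock (i + m) A = T A 0 (0 : Matrix (Fin m) (Fin m) F) := by
  ext r c
  refine Fin.addCases (fun a => ?_) (fun a => ?_) r <;>
  refine Fin.addCases (fun b => ?_) (fun b => ?_) c <;> simp [embedBlock, T]

lemma Vinv_T {i m : ℕ} (A : Matrix (Fin i) (Fin i) F) (B : Matrix (Fin i) (Fin m) F)
    (C : Matrix (Fin m) (Fin m) F) (hA : IsUnit A) (hC : IsNilpotent C) :
    Vinv (T A B C) = W0 F i m := by
  obtain ⟨B', hB⟩ := T_pow A B C (i + m)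
  have hC' := pow_eq_zero_of_nilp C hC (i + m) (by omega)
  ext v
  rw [mem_Vinv, mem_W0, hB, hC']
  constructor
  · rintro ⟨w, rfl⟩
    rw [T_natAdd]; simp
  · intro h
    obtain ⟨U, hU⟩ := hA.pow (i + m)
    refine ⟨Fin.append ((↑U⁻¹ : Matrix (Fin i) (Fin i) F) *ᵥ (v ∘ Fin.castAdd m)) 0, vec_ext ?_ ?_⟩
    · rw [T_castAdd, append_cast, append_nat, ← hU, Matrix.mulVec_mulVec]
      simp
    · rw [T_natAdd, h]; simp

lemma exists_T {i m : ℕ} (Y : Matrix (Fin (i + m)) (Fin (i + m)) F) (h : Vinv Y = W0 F i m) :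
    ∃ A B C, IsUnit A ∧ IsNilpotent C ∧ Y = T (i := i) (m := m) A B C := by
  have hstab : ∀ v ∈ W0 F i m, Y *ᵥ v ∈ W0 F i m := by
    rw [← h]
    intro v hv
    obtain ⟨w, rfl⟩ := (mem_Vinv _ _).1 hv
    rw [mem_Vinv]
    exact ⟨Y *ᵥ w, by simp [Matrix.mulVec_mulVec, ← pow_succ, ← pow_succ']⟩
  set Z := Y.submatrix (finSumFinEquiv (m := i) (n := m)) (finSumFinEquiv (m := i) (n := m)) with hZ
  have h21 : Z.toBlocks₂₁ = 0 := by
    ext a b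
    have := hstab (Pi.single (Fin.castAdd m b) 1) (by
      intro j
      rw [Pi.single_apply, if_neg]
      intro hh
      have := congrArg Fin.val hh
      simp at this
      omega) a
    simpa [hZ, Matrix.toBlocks₂₁] using this
  have hY : Y = T Z.toBlocks₁₁ Z.toBlocks₁₂ Z.toBlocks₂₂ := by
    rw [T, ← h21, Matrix.fromBlocks_toBlocks, hZ]
    simp
  refine ⟨_, _, _, ?_, ?_, hY⟩
  · generalize Z.toBlocks₁₁ = A at hY
    rw [← Matrix.mulVec_injective_iff_isUnit, ← Matrix.coe_mulVecLin, ← LinearMap.ker_eq_bot,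
      LinearMap.ker_eq_bot']
    intro u hu
    have hu' : A *ᵥ u = 0 := by simpa using hu
    have hw : Fin.append u (0 : Fin m → F) ∈ Vinv Y := by
      rw [h, mem_W0, append_nat]
    have hY0 : Y *ᵥ (Fin.append u (0 : Fin m → F)) = 0 := by
      rw [hY]
      apply vec_ext
      · rw [T_castAdd, append_cast, append_nat, hu']; simp
      · rw [T_natAdd, append_nat]; simp
    rcases Nat.eq_zero_or_pos i with rfl | hi
    · ext j; exact j.elim0
    have := disj Y _ hw (by
      obtain ⟨k, hk⟩ : ∃ k, i + m = k + 1 := ⟨i + m - 1, by omega⟩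
      rw [show Y ^ (i + m) = Y ^ (i + m - 1) * Y by rw [← pow_succ]; congr 1; omega,
        ← Matrix.mulVec_mulVec, hY0, Matrix.mulVec_zero])
    rw [← append_cast u (0 : Fin m → F), this]; rfl
  · generalize Z.toBlocks₁₁ = A at hY
    generalize Z.toBlocks₁₂ = B at hY
    generalize Z.toBlocks₂₂ = C at hY
    refine ⟨i + m, ?_⟩
    obtain ⟨B', hB⟩ := T_pow A B C (i + m)
    apply Matrix.mulVec_injective
    ext1 v
    have : Y ^ (i + m) *ᵥ (Fin.append 0 v) ∈ W0 F i m := by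
      rw [← h, mem_Vinv]; exact ⟨_, rfl⟩
    rw [mem_W0, hY, hB, T_natAdd, append_nat] at this
    rw [this]; simp

lemma conj_mem_iff {d : ℕ} {N : Set (Matrix (Fin d) (Fin d) F)} (hN : IsNI N) (g : GL (Fin d) F)
    (X : Matrix (Fin d) (Fin d) F) : (g : Matrix (Fin d) (Fin d) F) * X * (↑g⁻¹ : Matrix _ _ F) ∈ N ↔ X ∈ N := by
  constructor
  · intro h
    have := hN.1 _ h g
    simpa [mul_assoc] using this
  · intro h
    have := hN.1 _ h g⁻¹
    simpa using this

lemma T_mem_iff {i m : ℕ} {N : Set (Matrix (Fin (i + m)) (Fin (i + m)) F)} (hN : IsNI N)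
    (A : Matrix (Fin i) (Fin i) F) (B : Matrix (Fin i) (Fin m) F)
    (C : Matrix (Fin m) (Fin m) F) (hA : IsUnit A) (hC : IsNilpotent C) :
    T A B C ∈ N ↔ embedBlock (i + m) A ∈ N := by
  obtain ⟨B', hB⟩ := T_pow A B C (i + m)
  have hC' := pow_eq_zero_of_nilp C hC (i + m) (by omega)
  obtain ⟨U, hU⟩ := hA.pow (i + m)
  set K : Matrix (Fin i) (Fin m) F := (↑U⁻¹ : Matrix (Fin i) (Fin i) F) * B' with hK
  have hP : fittingProj (T A B C) = (T 1 K (0 : Matrix (Fin m) (Fin m) F)).mulVecLin := by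
    apply fittingProj_eq
    · intro x
      rw [Vinv_T A B C hA hC, mem_W0, Matrix.mulVecLin_apply, T_natAdd]
      simp
    · intro x
      rw [mem_Vnil, Matrix.mulVecLin_apply, Matrix.mulVec_sub, Matrix.mulVec_mulVec, hB, T_mul, hC',
        ← hU, hK, ← Matrix.mul_assoc]
      simp
  rw [hN.2, hP, ← Matrix.mulVecLin_mul, ← Matrix.toLin'_apply', LinearMap.toMatrix'_toLin', embed_eq,
    T_mul]
  let g : GL (Fin (i + m)) F := ⟨T 1 (-K) 1, T 1 K 1, by simp [T_mul, T_one], by simp [T_mul, T_one]⟩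
  rw [← conj_mem_iff hN g (T A 0 0)]
  have : (g : Matrix _ _ F) * T A 0 0 * (↑g⁻¹ : Matrix _ _ F) = T (A * 1) (A * K + B * (0 : Matrix (Fin m) (Fin m) F)) (C * 0) := by
    change T 1 (-K) 1 * T A 0 0 * T 1 K 1 = _
    simp [T_mul]
  rw [this]

lemma conj_pow' {d : ℕ} (g : GL (Fin d) F) (X : Matrix (Fin d) (Fin d) F) (k : ℕ) :
    ((g : Matrix (Fin d) (Fin d) F) * X * (↑g⁻¹ : Matrix _ _ F)) ^ k =
    (g : Matrix (Fin d) (Fin d) F) * X ^ k * (↑g⁻¹ : Matrix _ _ F) :=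
  Units.conj_pow g X k

lemma Vinv_conj {d : ℕ} (g : GL (Fin d) F) (X : Matrix (Fin d) (Fin d) F) :
    Vinv ((g : Matrix (Fin d) (Fin d) F) * X * (↑g⁻¹ : Matrix _ _ F)) =
    (Vinv X).map (g : Matrix (Fin d) (Fin d) F).mulVecLin := by
  ext v
  simp only [Submodule.mem_map, mem_Vinv, conj_pow', Matrix.mulVecLin_apply]
  constructor
  · rintro ⟨w, rfl⟩
    exact ⟨_, ⟨(↑g⁻¹ : Matrix _ _ F) *ᵥ w, rfl⟩, by simp [Matrix.mulVec_mulVec, mul_assoc]⟩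
  · rintro ⟨_, ⟨w, rfl⟩, rfl⟩
    exact ⟨(g : Matrix _ _ F) *ᵥ w, by simp [Matrix.mulVec_mulVec, mul_assoc]⟩

lemma exists_g {i m : ℕ} (W : Submodule F (Fin (i + m) → F)) (hW : Module.finrank F W = i) :
    ∃ g : GL (Fin (i + m)) F, (W0 F i m).map (g : Matrix _ _ F).mulVecLin = W := by
  obtain ⟨W', hW'⟩ := Submodule.exists_isCompl W
  have hf := Submodule.finrank_add_eq_of_isCompl hW'
  rw [hW, Module.finrank_fin_fun] at hf
  have hf' : Module.finrank F W' = m := by omega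
  let b1 := Module.finBasisOfFinrankEq F W hW
  let b2 := Module.finBasisOfFinrankEq F W' hf'
  let b := ((b1.prod b2).map (Submodule.prodEquivOfIsCompl W W' hW')).reindex finSumFinEquiv
  let φ : (Fin (i + m) → F) ≃ₗ[F] (Fin (i + m) → F) := b.equivFun.symm
  let g := (Matrix.GeneralLinearGroup.toLin (n := Fin (i + m)) (R := F)).symm
    (LinearMap.GeneralLinearGroup.ofLinearEquiv φ)
  have hg : (g : Matrix _ _ F).mulVecLin = φ.toLinearMap := by
    have : Matrix.GeneralLinearGroup.toLin g = LinearMap.GeneralLinearGroup.ofLinearEquiv φ :=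
      MulEquiv.apply_symm_apply _ _
    exact congrArg Units.val this
  refine ⟨g, ?_⟩
  rw [hg]
  have hle : (W0 F i m).map φ.toLinearMap ≤ W := by
    rintro _ ⟨v, hv, rfl⟩
    have : φ v = ∑ j, v j • b j := by simp [φ, Module.Basis.equivFun_symm_apply]
    change φ v ∈ W
    rw [this, Fin.sum_univ_add]
    apply Submodule.add_mem
    · apply Submodule.sum_mem
      intro j _
      apply Submodule.smul_mem
      simp [b]
    · have hv' : ∀ j : Fin m, v (Fin.natAdd i j) = 0 := hv
      simp [hv']
  have hge : W ≤ (W0 F i m).map φ.toLinearMap := by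
    intro x hx
    refine ⟨b.equivFun x, ?_, by simp [φ]⟩
    intro j
    have : (Submodule.prodEquivOfIsCompl W W' hW').symm x = (⟨x, hx⟩, 0) := by
      rw [LinearEquiv.symm_apply_eq]; simp
    simp [b, -Submodule.prodEquivOfIsCompl_symm_apply, this]
  exact le_antisymm hle hge

lemma count {i m : ℕ} [Fintype F] {N : Set (Matrix (Fin (i + m)) (Fin (i + m)) F)} (hN : IsNI N) :
    Nat.card {X : Matrix (Fin (i + m)) (Fin (i + m)) F | X ∈ N ∧ Module.finrank F (Vinv X) = i} =
      Nat.card {W : Submodule F (Fin (i + m) → F) | Module.finrank F W = i} *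
        (Nat.card (NIsub N i) * (Fintype.card F ^ (i * m) *
          Nat.card {C : Matrix (Fin m) (Fin m) F // IsNilpotent C})) := by
  choose g hg using fun W : {W : Submodule F (Fin (i + m) → F) | Module.finrank F W = i} =>
    exists_g W.1 W.2
  have hB : Fintype.card F ^ (i * m) = Nat.card (Matrix (Fin i) (Fin m) F) := by
    classical
    rw [Nat.card_eq_fintype_card, Module.card_eq_pow_finrank (K := F) (V := Matrix _ _ _), Module.finrank_matrix]
    simp
  rw [hB, ← Nat.card_prod, ← Nat.card_prod, ← Nat.card_prod]
  symm
  have hV : ∀ (W : {W : Submodule F (Fin (i + m) → F) | Module.finrank F W = i})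
      (A : GL (Fin i) F) (B : Matrix (Fin i) (Fin m) F) (C : Matrix (Fin m) (Fin m) F)
      (_ : IsNilpotent C), Vinv ((g W : Matrix _ _ F) * T A.1 B C * (↑(g W)⁻¹ : Matrix _ _ F))
        = W.1 := by
    intro W A B C hC
    rw [Vinv_conj, Vinv_T _ _ _ A.isUnit hC, hg]
  apply Nat.card_eq_of_bijective (fun p => ⟨(g p.1 : Matrix _ _ F) * T p.2.1.1.1 p.2.2.1 p.2.2.2.1 *
    (↑(g p.1)⁻¹ : Matrix _ _ F), by
      obtain ⟨W, ⟨A, hA⟩, B, ⟨C, hC⟩⟩ := p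
      refine ⟨?_, ?_⟩
      · rw [conj_mem_iff hN, T_mem_iff hN _ _ _ A.isUnit hC]
        exact hA
      · dsimp only
        rw [hV W A B C hC]
        exact W.2⟩)
  constructor
  · rintro ⟨W, ⟨A, hA⟩, B, ⟨C, hC⟩⟩ ⟨W', ⟨A', hA'⟩, B', ⟨C', hC'⟩⟩ h
    have h := congrArg Subtype.val h
    dsimp only at h
    have hW : W = W' := by
      apply Subtype.ext
      rw [← hV W A B C hC, h, hV W' A' B' C' hC']
    subst hW
    have h2 : T A.1 B C = T A'.1 B' C' := by
      have := congrArg (fun M => (↑(g W)⁻¹ : Matrix _ _ F) * M * (g W : Matrix _ _ F)) h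
      simpa [mul_assoc] using this
    obtain ⟨h3, h4, h5⟩ := T_inj h2
    have h3 : A = A' := Units.ext h3
    subst h3 h4 h5
    rfl
  · rintro ⟨X, hX, hXi⟩
    set W : {W : Submodule F (Fin (i + m) → F) | Module.finrank F W = i} := ⟨Vinv X, hXi⟩ with hW
    have hXY : X = (g W : Matrix _ _ F) * ((↑(g W)⁻¹ : Matrix _ _ F) * X * (g W : Matrix _ _ F)) *
        (↑(g W)⁻¹ : Matrix _ _ F) := by
      simp [mul_assoc]
    set Y := (↑(g W)⁻¹ : Matrix _ _ F) * X * (g W : Matrix _ _ F) with hY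
    have hYV : Vinv Y = W0 F i m := by
      have h1 := Vinv_conj (g W)⁻¹ X
      rw [inv_inv] at h1
      rw [hY, h1, show Vinv X = W.1 from rfl, ← hg W, ← Submodule.map_comp, ← Matrix.mulVecLin_mul]
      simp
    obtain ⟨A, B, C, hA, hC, hT⟩ := exists_T Y hYV
    obtain ⟨A, rfl⟩ := hA
    refine ⟨⟨W, ⟨A, ?_⟩, B, ⟨C, hC⟩⟩, ?_⟩
    · change embedBlock _ _ ∈ N
      rw [← T_mem_iff hN _ B C A.isUnit hC, ← hT, ← conj_mem_iff hN (g W), ← hXY]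
      exact hX
    · apply Subtype.ext
      dsimp only
      rw [← hT, ← hXY]

lemma lin (F : Type*) [Field F] [Fintype F] {i d : ℕ} (hi : i ≤ d) :
    Nat.card {W : Submodule F (Fin d → F) | Module.finrank F W = i} * Nat.card (GL (Fin i) F) =
      ∏ j ∈ Finset.range i, (Fintype.card F ^ d - Fintype.card F ^ j) := by
  classical
  have h1 := card_linearIndependent (K := F) (V := Fin d → F) (k := i) (by simpa using hi)
  rw [Module.finrank_fin_fun] at h1
  rw [Finset.prod_range, ← h1, Matrix.card_GL_field]
  have h2 : ∀ W : {W : Submodule F (Fin d → F) | Module.finrank F W = i},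
      Nat.card {s : Fin i → W.1 // LinearIndependent F s} =
        ∏ j : Fin i, (Fintype.card F ^ i - Fintype.card F ^ (j : ℕ)) := by
    intro W
    have hW : Module.finrank F W.1 = i := W.2
    have := card_linearIndependent (K := F) (V := W.1) (k := i) hW.ge
    rwa [hW] at this
  have h3 : Nat.card (Σ W : {W : Submodule F (Fin d → F) | Module.finrank F W = i},
      {s : Fin i → W.1 // LinearIndependent F s}) =
      Nat.card {W : Submodule F (Fin d → F) | Module.finrank F W = i} *
      ∏ j : Fin i, (Fintype.card F ^ i - Fintype.card F ^ (j : ℕ)) := by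
    have : Fintype {W : Submodule F (Fin d → F) | Module.finrank F W = i} := Fintype.ofFinite _
    rw [Nat.card_sigma, Finset.sum_congr rfl (fun W _ => h2 W), Finset.sum_const, smul_eq_mul,
      Finset.card_univ, Nat.card_eq_fintype_card]
  rw [← h3]
  have hspan : ∀ (W : {W : Submodule F (Fin d → F) | Module.finrank F W = i})
      (s : Fin i → W.1), LinearIndependent F s →
      Submodule.span F (Set.range (fun j => (s j : Fin d → F))) = W.1 := by
    intro W s hs
    have hW : Module.finrank F W.1 = i := W.2
    have hs' : LinearIndependent F (fun j => (s j : Fin d → F)) :=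
      hs.map' W.1.subtype (Submodule.ker_subtype _)
    apply Submodule.eq_of_le_of_finrank_eq
    · rw [Submodule.span_le]
      rintro _ ⟨j, rfl⟩
      exact (s j).2
    · rw [finrank_span_eq_card hs', hW, Fintype.card_fin]
  apply Nat.card_eq_of_bijective (fun p => ⟨fun j => (p.2.1 j : Fin d → F),
    p.2.2.map' p.1.1.subtype (Submodule.ker_subtype _)⟩)
  constructor
  · rintro ⟨W, s, hs⟩ ⟨W', s', hs'⟩ h
    have h : (fun j => (s j : Fin d → F)) = fun j => (s' j : Fin d → F) := congrArg Subtype.val h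
    have hW : W = W' := by
      apply Subtype.ext
      rw [← hspan W s hs, ← hspan W' s' hs', h]
    subst hW
    have : s = s' := by
      ext1 j
      exact Subtype.ext (congrFun h j)
    subst this
    rfl
  · rintro ⟨s, hs⟩
    refine ⟨⟨⟨Submodule.span F (Set.range s), ?_⟩,
      fun j => ⟨s j, Submodule.subset_span ⟨j, rfl⟩⟩, ?_⟩, rfl⟩
    · have := finrank_span_eq_card hs
      simpa using this
    · exact linearIndependent_span hs

lemma ident (q d : ℕ) (hq : 0 < q) (k : ℕ) (hk : k ≤ d) :
    ∑ i ∈ Finset.range k, q ^ ((d - i) * (d - 1)) * ∏ j ∈ Finset.range i, (q ^ d - q ^ j) +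
      q ^ (d * (d - k)) * ∏ j ∈ Finset.range k, (q ^ d - q ^ j) = q ^ (d * d) := by
  induction k with
  | zero => simp
  | succ k ih =>
    rw [← ih (by omega), Finset.sum_range_succ, Finset.prod_range_succ, add_assoc]
    congr 1
    generalize ∏ j ∈ Finset.range k, (q ^ d - q ^ j) = P
    obtain ⟨r, rfl⟩ := Nat.exists_eq_add_of_le hk
    have hle : q ^ k ≤ q ^ (k + 1 + r) := Nat.pow_le_pow_right hq (by omega)
    obtain ⟨z, hz⟩ := Nat.exists_eq_add_of_le hle
    have e1 : k + 1 + r - k = r + 1 := by omega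
    have e2 : k + 1 + r - 1 = k + r := by omega
    have e3 : k + 1 + r - (k + 1) = r := by omega
    rw [e1, e2, e3]
    have e4 : (r + 1) * (k + r) = (k + 1 + r) * r + k := by ring
    have e5 : (k + 1 + r) * (r + 1) = (k + 1 + r) * r + (k + 1 + r) := by ring
    rw [e4, e5, pow_add, pow_add q ((k + 1 + r) * r) (k + 1 + r), hz, Nat.add_sub_cancel_left]
    ring

lemma isNI_univ {d : ℕ} : IsNI (Set.univ : Set (Matrix (Fin d) (Fin d) F)) :=
  ⟨fun _ _ _ => trivial, fun _ => Iff.rfl⟩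

lemma nil_card (F : Type*) [Field F] [Fintype F] (d : ℕ) :
    Nat.card {C : Matrix (Fin d) (Fin d) F // IsNilpotent C} = Fintype.card F ^ (d * (d - 1)) := by
  classical
  induction d using Nat.strong_induction_on with
  | _ d ih =>
  have hq : 0 < Fintype.card F := Fintype.card_pos
  set q := Fintype.card F with hqdef
  have hterm : ∀ i ≤ d, Nat.card {X : Matrix (Fin d) (Fin d) F | Module.finrank F (Vinv X) = i} =
      (q ^ (i * (d - i)) * Nat.card {C : Matrix (Fin (d - i)) (Fin (d - i)) F // IsNilpotent C}) *
      ∏ j ∈ Finset.range i, (q ^ d - q ^ j) := by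
    intro i hi
    rw [← lin F hi]
    obtain ⟨m, rfl⟩ := Nat.exists_eq_add_of_le hi
    have h := count (i := i) (m := m) (F := F) isNI_univ
    have hG : Nat.card (NIsub (Set.univ : Set (Matrix (Fin (i + m)) (Fin (i + m)) F)) i) =
        Nat.card (GL (Fin i) F) := by
      simp [NIsub]
    rw [hG] at h
    simp only [Set.mem_univ, true_and] at h
    rw [h, Nat.add_sub_cancel_left]
    ring
  have htot : ∑ i ∈ Finset.range (d + 1),
      Nat.card {X : Matrix (Fin d) (Fin d) F | Module.finrank F (Vinv X) = i} = q ^ (d * d) := by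
    have h1 : q ^ (d * d) = Fintype.card (Matrix (Fin d) (Fin d) F) := by
      rw [Module.card_eq_pow_finrank (K := F), Module.finrank_matrix]
      simp [hqdef]
    rw [h1, ← Finset.card_univ, Finset.card_eq_sum_card_fiberwise
      (f := fun X : Matrix (Fin d) (Fin d) F => Module.finrank F (Vinv X)) (t := Finset.range (d + 1))]
    · apply Finset.sum_congr rfl
      intro i _
      rw [Nat.card_eq_fintype_card, Fintype.card_ofFinset]
      rfl
    · intro X _
      have := Submodule.finrank_le (Vinv X)
      rw [Module.finrank_fin_fun] at this
      simp
      omega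
  have hid := ident q d hq d le_rfl
  have hid' : ∑ i ∈ Finset.range (d + 1), q ^ ((d - i) * (d - 1)) *
      ∏ j ∈ Finset.range i, (q ^ d - q ^ j) = q ^ (d * d) := by
    rw [Finset.sum_range_succ]
    simpa using hid
  rw [← hid', Finset.sum_range_succ', Finset.sum_range_succ'] at htot
  rw [hterm 0 (Nat.zero_le _)] at htot
  have hrest : ∑ k ∈ Finset.range d,
      Nat.card {X : Matrix (Fin d) (Fin d) F | Module.finrank F (Vinv X) = k + 1} =
      ∑ k ∈ Finset.range d, q ^ ((d - (k + 1)) * (d - 1)) *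
        ∏ j ∈ Finset.range (k + 1), (q ^ d - q ^ j) := by
    apply Finset.sum_congr rfl
    intro k hk
    rw [Finset.mem_range] at hk
    rw [hterm (k + 1) (by omega), ih (d - (k + 1)) (by omega), ← pow_add]
    congr 2
    obtain ⟨r, rfl⟩ := Nat.exists_eq_add_of_le (show k + 1 ≤ d by omega)
    rw [Nat.add_sub_cancel_left]
    rcases r with _ | r
    · simp
    · have e2 : k + 1 + (r + 1) - 1 = k + 1 + r := by omega
      rw [e2, Nat.add_sub_cancel]; ring
  rw [hrest] at htot
  have := Nat.add_left_cancel htot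
  simpa using this

end NIaux

theorem stmt1 (q d : ℕ) (hq : IsPrimePow q) (hd : 0 < d)
    (F : Type*) [Field F] [Fintype F] (hF : Fintype.card F = q)
    (N : Set (Matrix (Fin d) (Fin d) F)) (hN : IsNI N) (i : ℕ) (hi : i ≤ d) :
    Nat.card {X : Matrix (Fin d) (Fin d) F | X ∈ N ∧ Module.finrank F (Vinv X) = i} =
      Nat.card {W : Submodule F (Fin d → F) | Module.finrank F W = i} *
        q ^ ((d - i) * (d - 1)) * Nat.card (NIsub N i) := by
  subst hF
  obtain ⟨m, rfl⟩ := Nat.exists_eq_add_of_le hi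
  rw [NIaux.count hN, NIaux.nil_card, ← pow_add, Nat.add_sub_cancel_left]
  have e : i * m + m * (m - 1) = m * (i + m - 1) := by
    rcases m with _ | m
    · simp
    · have e2 : i + (m + 1) - 1 = i + m := by omega
      rw [e2, Nat.add_sub_cancel]; ring
  rw [e]
  ring
end

section
/- Let N be a nilpotent-independent (NI) subset of M(d,q), let 0 \le i \le d, and let W be the span of the first i standard basis vectors of \mathbb{F}_q^d. Then |{X \in N : V_inv(X) = W}| = q^{i(d-i)} \cdot q^{(d-i)(d-i-1)} \cdot |N_i|. -/
open Matrix Finset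

open Module

lemma vinv_disj {F : Type*} [Field F] {d : ℕ} (X : Matrix (Fin d) (Fin d) F) :
    IsCompl (Vinv X) (Vnil X) := by
  have hk : LinearMap.ker (X.mulVecLin ^ (d + d)) = LinearMap.ker (X.mulVecLin ^ d) := by
    have := Module.End.ker_pow_eq_ker_pow_finrank_of_le (f := X.mulVecLin) (m := d + d)
      (by simp)
    simpa using this
  have hdis : Disjoint (Vinv X) (Vnil X) := by
    rw [Submodule.disjoint_def]
    rintro x ⟨y, rfl⟩ hx
    have : y ∈ LinearMap.ker (X.mulVecLin ^ (d + d)) := by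
      rw [LinearMap.mem_ker, pow_add]
      exact hx
    rw [hk] at this
    exact this
  refine ⟨hdis, ?_⟩
  rw [codisjoint_iff]
  apply Submodule.eq_top_of_disjoint _ _ _ hdis
  exact (LinearMap.finrank_range_add_finrank_ker (X.mulVecLin ^ d)).symm.le

/-- The span of the first `i` standard basis vectors. -/
def Wst (F : Type*) [Field F] (i m : ℕ) : Submodule F (Fin (i + m) → F) where
  carrier := {v | ∀ j : Fin m, v (Fin.natAdd i j) = 0}
  add_mem' := by intro a b ha hb j; simp [ha j, hb j]
  zero_mem' := by intro j; rfl
  smul_mem' := by intro c a ha j; simp [ha j]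

lemma span_eq_Wst {F : Type*} [Field F] (i m : ℕ) (hi : i ≤ i + m) :
    Submodule.span F (Set.range fun j : Fin i => (Pi.single (Fin.castLE hi j) (1 : F) : Fin (i+m) → F))
      = Wst F i m := by
  apply le_antisymm
  · rw [Submodule.span_le]
    rintro _ ⟨j, rfl⟩ k
    apply Pi.single_eq_of_ne
    intro h
    have := congrArg Fin.val h
    simp at this
    omega
  · intro v hv
    have : v = ∑ j : Fin i, v (Fin.castAdd m j) •
        (Pi.single (Fin.castLE hi j) (1 : F) : Fin (i+m) → F) := by
      conv_lhs => rw [← Finset.univ_sum_single v, Fin.sum_univ_add]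
      have h2 : ∀ j : Fin m, v (Fin.natAdd i j) = 0 := hv
      simp [h2, ← Pi.single_smul]
      rfl
    rw [this]
    exact Submodule.sum_mem _ fun j _ => Submodule.smul_mem _ _ (Submodule.subset_span ⟨j, rfl⟩)

/-- block matrices -/
def blk {F : Type*} [Field F] {i m : ℕ} (A : Matrix (Fin i) (Fin i) F) (B : Matrix (Fin i) (Fin m) F)
    (C : Matrix (Fin m) (Fin i) F) (D : Matrix (Fin m) (Fin m) F) :
    Matrix (Fin (i + m)) (Fin (i + m)) F :=
  Matrix.reindexAlgEquiv F F finSumFinEquiv (Matrix.fromBlocks A B C D)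

lemma blk_surj {F : Type*} [Field F] {i m : ℕ} (X : Matrix (Fin (i + m)) (Fin (i + m)) F) :
    ∃ A B C D, X = blk (i := i) (m := m) A B C D := by
  obtain ⟨Y, rfl⟩ := (Matrix.reindexAlgEquiv F F (finSumFinEquiv (m := i) (n := m))).surjective X
  exact ⟨_, _, _, _, by rw [blk, Matrix.fromBlocks_toBlocks]⟩

lemma blk_inj {F : Type*} [Field F] {i m : ℕ} {A A' : Matrix (Fin i) (Fin i) F}
    {B B' : Matrix (Fin i) (Fin m) F}
    {C C' : Matrix (Fin m) (Fin i) F} {D D' : Matrix (Fin m) (Fin m) F}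
    (h : blk A B C D = blk A' B' C' D') : A = A' ∧ B = B' ∧ C = C' ∧ D = D' :=
  Matrix.fromBlocks_inj.1 ((Matrix.reindexAlgEquiv F F finSumFinEquiv).injective h)

lemma blk_mul {F : Type*} [Field F] {i m : ℕ} (A A' : Matrix (Fin i) (Fin i) F)
    (B B' : Matrix (Fin i) (Fin m) F)
    (C C' : Matrix (Fin m) (Fin i) F) (D D' : Matrix (Fin m) (Fin m) F) :
    blk A B C D * blk A' B' C' D' =
      blk (A * A' + B * C') (A * B' + B * D') (C * A' + D * C') (C * B' + D * D') := by
  rw [blk, blk, ← map_mul, Matrix.fromBlocks_multiply]; rfl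

lemma blk_one {F : Type*} [Field F] {i m : ℕ} :
    blk (1 : Matrix (Fin i) (Fin i) F) 0 0 (1 : Matrix (Fin m) (Fin m) F) = 1 := by
  rw [blk, Matrix.fromBlocks_one, map_one]

lemma blk_pow {F : Type*} [Field F] {i m : ℕ} (A : Matrix (Fin i) (Fin i) F)
    (B : Matrix (Fin i) (Fin m) F) (D : Matrix (Fin m) (Fin m) F) (k : ℕ) :
    ∃ B', blk A B 0 D ^ k = blk (A ^ k) B' 0 (D ^ k) := by
  induction k with
  | zero => exact ⟨0, by simp [blk_one]⟩
  | succ k ih =>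
    obtain ⟨B', h⟩ := ih
    refine ⟨A ^ k * B + B' * D, ?_⟩
    rw [pow_succ, h, blk_mul]
    simp only [Matrix.mul_zero, Matrix.zero_mul, add_zero, zero_add, pow_succ]

lemma blk_mulVec_l {F : Type*} [Field F] {i m : ℕ} (A : Matrix (Fin i) (Fin i) F)
    (B : Matrix (Fin i) (Fin m) F) (C : Matrix (Fin m) (Fin i) F) (D : Matrix (Fin m) (Fin m) F)
    (v : Fin (i + m) → F) (j : Fin i) :
    (blk A B C D *ᵥ v) (Fin.castAdd m j) =
      (A *ᵥ (fun k => v (Fin.castAdd m k))) j + (B *ᵥ (fun k => v (Fin.natAdd i k))) j := by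
  simp [blk, Matrix.mulVec, dotProduct, Fin.sum_univ_add]

lemma blk_mulVec_r {F : Type*} [Field F] {i m : ℕ} (A : Matrix (Fin i) (Fin i) F)
    (B : Matrix (Fin i) (Fin m) F) (C : Matrix (Fin m) (Fin i) F) (D : Matrix (Fin m) (Fin m) F)
    (v : Fin (i + m) → F) (j : Fin m) :
    (blk A B C D *ᵥ v) (Fin.natAdd i j) =
      (C *ᵥ (fun k => v (Fin.castAdd m k))) j + (D *ᵥ (fun k => v (Fin.natAdd i k))) j := by
  simp [blk, Matrix.mulVec, dotProduct, Fin.sum_univ_add]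

lemma embedBlock_eq_s4 {F : Type*} [Field F] {i m : ℕ} (A : Matrix (Fin i) (Fin i) F) :
    embedBlock (i + m) A = blk A 0 0 (0 : Matrix (Fin m) (Fin m) F) := by
  ext r c
  refine Fin.addCases (fun r => ?_) (fun r => ?_) r <;>
  refine Fin.addCases (fun c => ?_) (fun c => ?_) c <;> simp [embedBlock, blk]

lemma mem_vinv {F : Type*} [Field F] {d : ℕ} (X : Matrix (Fin d) (Fin d) F) (v) :
    v ∈ Vinv X ↔ ∃ u, (X ^ d) *ᵥ u = v := by
  have : X.mulVecLin ^ d = (X ^ d).mulVecLin := by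
    have := map_pow (Matrix.toLinAlgEquiv' (R := F) (n := Fin d)) X d
    exact this.symm
  rw [Vinv, this]; rfl

lemma vinv_map {F : Type*} [Field F] {d : ℕ} (X : Matrix (Fin d) (Fin d) F) (v)
    (h : v ∈ Vinv X) : X *ᵥ v ∈ Vinv X := by
  rw [mem_vinv] at h ⊢
  obtain ⟨u, rfl⟩ := h
  exact ⟨X *ᵥ u, by simp [← pow_succ, ← pow_succ']⟩

lemma vinv_inj {F : Type*} [Field F] {d : ℕ} (X : Matrix (Fin d) (Fin d) F) (v)
    (h : v ∈ Vinv X) (h0 : X *ᵥ v = 0) : v = 0 := by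
  rcases d with _ | d
  · exact Subsingleton.elim _ _
  refine Submodule.disjoint_def.1 (vinv_disj X).1 v h ?_
  rw [Vnil, LinearMap.mem_ker, pow_succ]
  show (X.mulVecLin ^ d) (X *ᵥ v) = 0
  rw [h0, map_zero]

lemma key {F : Type*} [Field F] {i m : ℕ} (A : Matrix (Fin i) (Fin i) F)
    (B : Matrix (Fin i) (Fin m) F) (C : Matrix (Fin m) (Fin i) F) (D : Matrix (Fin m) (Fin m) F) :
    Vinv (blk A B C D) = Wst F i m ↔ C = 0 ∧ IsUnit A ∧ IsNilpotent D := by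
  constructor
  · intro h
    have hw : ∀ u : Fin i → F, (Fin.append u (0 : Fin m → F)) ∈ Vinv (blk A B C D) := by
      intro u
      rw [h]
      intro j
      simp
    have hC : C = 0 := by
      apply Matrix.ext_of_mulVec_single
      intro k
      have h1 := vinv_map _ _ (hw (Pi.single k 1))
      rw [h] at h1
      ext j
      have h2 := h1 j
      rw [blk_mulVec_r] at h2
      simpa [← Pi.zero_def] using h2
    subst hC
    refine ⟨rfl, ?_, ?_⟩
    · rw [← Matrix.mulVec_injective_iff_isUnit]
      refine (injective_iff_map_eq_zero A.mulVecLin).2 fun u hu => ?_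
      have hu' : A *ᵥ u = 0 := hu
      have h1 := vinv_inj _ _ (hw u) (by
        ext k
        refine Fin.addCases (fun k => ?_) (fun k => ?_) k
        · rw [blk_mulVec_l]
          simp [← Pi.zero_def, hu']
        · rw [blk_mulVec_r]
          simp [← Pi.zero_def])
      ext k
      simpa using congrFun h1 (Fin.castAdd m k)
    · refine ⟨i + m, ?_⟩
      obtain ⟨B', hB⟩ := blk_pow A B D (i + m)
      apply Matrix.ext_of_mulVec_single
      intro k
      have h1 : (blk A B 0 D ^ (i + m)) *ᵥ (Fin.append 0 (Pi.single k 1)) ∈ Wst F i m := by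
        rw [← h, mem_vinv]; exact ⟨_, rfl⟩
      ext j
      have h2 := h1 j
      rw [hB, blk_mulVec_r] at h2
      simpa using h2
  · rintro ⟨rfl, hA, hD⟩
    have hD' : D ^ (i + m) = 0 := by
      have h1 : D ^ m = 0 := by
        have h2 := (Matrix.isNilpotent_charpoly_sub_pow_of_isNilpotent hD).eq_zero
        have h3 := D.aeval_self_charpoly
        rw [sub_eq_zero.1 h2] at h3
        simpa using h3
      rw [pow_add, h1, mul_zero]
    obtain ⟨B', hB⟩ := blk_pow A B D (i + m)
    ext v
    rw [mem_vinv, hB, hD']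
    constructor
    · rintro ⟨u, rfl⟩ j
      rw [blk_mulVec_r]; simp
    · intro hv
      obtain ⟨w, hw⟩ := (Matrix.mulVec_surjective_iff_isUnit.2 (hA.pow (i + m)))
        (fun k => v (Fin.castAdd m k))
      refine ⟨Fin.append w 0, ?_⟩
      ext k
      refine Fin.addCases (fun k => ?_) (fun k => ?_) k
      · rw [blk_mulVec_l]
        simpa [← Pi.zero_def] using congrFun hw k
      · rw [blk_mulVec_r, hv k]; simp

lemma fp_mem {F : Type*} [Field F] {d : ℕ} (X : Matrix (Fin d) (Fin d) F) (v) :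
    fittingProj X v ∈ Vinv X := by
  rw [fittingProj, dif_pos (vinv_disj X)]
  exact Subtype.property _

lemma fp_eq {F : Type*} [Field F] {d : ℕ} (X : Matrix (Fin d) (Fin d) F) (v)
    (h : v ∈ Vinv X) : fittingProj X v = v := by
  rw [fittingProj, dif_pos (vinv_disj X)]
  exact congrArg Subtype.val (Submodule.projectionOnto_apply_left (vinv_disj X) ⟨v, h⟩)

lemma mem_N {F : Type*} [Field F] {i m : ℕ} (N : Set (Matrix (Fin (i + m)) (Fin (i + m)) F))
    (hN : IsNI N) (A : Matrix (Fin i) (Fin i) F)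
    (B : Matrix (Fin i) (Fin m) F) (D : Matrix (Fin m) (Fin m) F)
    (h : Vinv (blk A B 0 D) = Wst F i m) :
    blk A B 0 D ∈ N ↔ embedBlock (i + m) A ∈ N := by
  set X := blk A B 0 D with hX
  obtain ⟨a, T, c, e, hP⟩ := blk_surj (i := i) (m := m) (LinearMap.toMatrix' (fittingProj X))
  have hPv : ∀ v, blk a T c e *ᵥ v = fittingProj X v := by
    intro v; rw [← hP, LinearMap.toMatrix'_mulVec]
  have hmem : ∀ v, blk a T c e *ᵥ v ∈ Wst F i m := by
    intro v; rw [hPv, ← h]; exact fp_mem X v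
  have hc : c = 0 := by
    apply Matrix.ext_of_mulVec_single
    intro k
    ext j
    have h2 := hmem (Fin.append (Pi.single k 1) 0) j
    rw [blk_mulVec_r] at h2
    simpa [← Pi.zero_def] using h2
  have he : e = 0 := by
    apply Matrix.ext_of_mulVec_single
    intro k
    ext j
    have h2 := hmem (Fin.append 0 (Pi.single k 1)) j
    rw [blk_mulVec_r] at h2
    simpa [← Pi.zero_def] using h2
  have ha : a = 1 := by
    apply Matrix.ext_of_mulVec_single
    intro k
    ext j
    have h1 : Fin.append (Pi.single k 1) (0 : Fin m → F) ∈ Vinv X := by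
      rw [h]; intro j; simp
    have h2 := congrFun ((hPv _).trans (fp_eq X _ h1)) (Fin.castAdd m j)
    rw [blk_mulVec_l] at h2
    have h3 : a j k = (Pi.single k 1 : Fin i → F) j := by simpa [← Pi.zero_def] using h2
    simpa [Matrix.one_apply, Pi.single_apply] using h3
  subst hc he ha
  have hXP : LinearMap.toMatrix' (X.mulVecLin ∘ₗ fittingProj X) = blk A (A * T) 0 0 := by
    rw [LinearMap.toMatrix'_comp, hP, ← Matrix.toLin'_apply', LinearMap.toMatrix'_toLin', hX, blk_mul]
    simp
  rw [hN.2 X, hXP, embedBlock_eq_s4]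
  let g : GL (Fin (i + m)) F := ⟨blk 1 T 0 1, blk 1 (-T) 0 1, by
    rw [blk_mul]; simp [blk_one], by rw [blk_mul]; simp [blk_one]⟩
  have hg : (↑g : Matrix (Fin (i + m)) (Fin (i + m)) F) = blk 1 T 0 1 := rfl
  have hg' : (↑g⁻¹ : Matrix (Fin (i + m)) (Fin (i + m)) F) = blk 1 (-T) 0 1 := rfl
  constructor
  · intro h1
    have := hN.1 _ h1 g⁻¹
    rw [inv_inv, hg, hg', blk_mul, blk_mul] at this
    simpa using this
  · intro h1
    have := hN.1 _ h1 g
    rw [hg, hg', blk_mul, blk_mul] at this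
    simpa using this

/-- number of nilpotent matrices -/
noncomputable def nilCard (F : Type*) [Field F] (m : ℕ) : ℕ :=
  Nat.card {D : Matrix (Fin m) (Fin m) F // IsNilpotent D}

lemma main_count {F : Type*} [Field F] [Fintype F] {i m : ℕ}
    (N : Set (Matrix (Fin (i + m)) (Fin (i + m)) F)) (hN : IsNI N) :
    Nat.card {X : Matrix (Fin (i + m)) (Fin (i + m)) F | X ∈ N ∧ Vinv X = Wst F i m} =
      Fintype.card F ^ (i * m) * nilCard F m * Nat.card (NIsub N i) := by
  let f : (Matrix (Fin i) (Fin m) F × {D : Matrix (Fin m) (Fin m) F // IsNilpotent D}) ×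
      (NIsub N i) → {X : Matrix (Fin (i + m)) (Fin (i + m)) F | X ∈ N ∧ Vinv X = Wst F i m} :=
    fun p => ⟨blk (↑(p.2.1) : Matrix (Fin i) (Fin i) F) p.1.1 0 p.1.2.1, by
      have h1 : Vinv (blk (↑(p.2.1) : Matrix (Fin i) (Fin i) F) p.1.1 0 p.1.2.1) = Wst F i m :=
        (key _ _ _ _).2 ⟨rfl, Units.isUnit _, p.1.2.2⟩
      exact ⟨(mem_N N hN _ _ _ h1).2 p.2.2, h1⟩⟩
  have hf : Function.Bijective f := by
    constructor
    · rintro ⟨⟨B, D, hD⟩, A, hA⟩ ⟨⟨B', D', hD'⟩, A', hA'⟩ h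
      obtain ⟨h1, h2, -, h3⟩ := blk_inj (congrArg Subtype.val h)
      simp only at h1 h2 h3
      have h1 := Units.ext h1
      subst h1 h2 h3
      rfl
    · rintro ⟨X, hX, hV⟩
      obtain ⟨A, B, C, D, rfl⟩ := blk_surj (i := i) (m := m) X
      obtain ⟨rfl, ⟨A, rfl⟩, hD⟩ := (key _ _ _ _).1 hV
      exact ⟨⟨⟨B, D, hD⟩, ⟨A, (mem_N N hN _ _ _ hV).1 hX⟩⟩, rfl⟩
  rw [← Nat.card_congr (Equiv.ofBijective f hf), Nat.card_prod, Nat.card_prod, nilCard]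
  congr 2
  simp [Matrix, ← pow_mul, mul_comm]

lemma univ_count {F : Type*} [Field F] [Fintype F] {i m : ℕ} :
    Nat.card {X : Matrix (Fin (i + m)) (Fin (i + m)) F // Vinv X = Wst F i m} =
      Fintype.card F ^ (i * m) * nilCard F m * Nat.card (GL (Fin i) F) := by
  have := main_count (F := F) (i := i) (m := m) Set.univ ⟨by simp, by simp⟩
  simpa [NIsub, Set.coe_ofPred] using this

lemma exists_equiv {F V : Type*} [Field F] [AddCommGroup V] [Module F V] [FiniteDimensional F V]
    (U W : Submodule F V) (h : finrank F U = finrank F W) :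
    ∃ e : V ≃ₗ[F] V, U.map (e : V →ₗ[F] V) = W := by
  obtain ⟨U', hU⟩ := U.exists_isCompl
  obtain ⟨W', hW⟩ := W.exists_isCompl
  have h' : finrank F U' = finrank F W' := by
    have h1 := Submodule.finrank_add_eq_of_isCompl hU
    have h2 := Submodule.finrank_add_eq_of_isCompl hW
    omega
  let e := (Submodule.prodEquivOfIsCompl U U' hU).symm ≪≫ₗ
    ((LinearEquiv.ofFinrankEq _ _ h).prodCongr (LinearEquiv.ofFinrankEq _ _ h')) ≪≫ₗ
      (Submodule.prodEquivOfIsCompl W W' hW)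
  refine ⟨e, Submodule.eq_of_le_of_finrank_eq ?_ ?_⟩
  · rintro _ ⟨x, hx, rfl⟩
    have : (Submodule.prodEquivOfIsCompl U U' hU).symm x = ((Subtype.mk x hx : U), (0 : U')) :=
      Submodule.prodEquivOfIsCompl_symm_apply_left _ _ hU (⟨x, hx⟩ : U)
    simp [e, this]
  · rw [← h]; exact LinearEquiv.finrank_map_eq e U

lemma finrank_Wst {F : Type*} [Field F] (i m : ℕ) : finrank F (Wst F i m) = i := by
  rw [← span_eq_Wst i m (by omega)]
  rw [finrank_span_eq_card]
  · simp
  · have := (Pi.basisFun F (Fin (i + m))).linearIndependent.comp (Fin.castLE (by omega : i ≤ i + m))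
      (Fin.castLE_injective _)
    convert this using 1
    ext j; simp

lemma conj_count {F : Type*} [Field F] [Fintype F] {i m : ℕ} (U : Submodule F (Fin (i + m) → F))
    (hU : finrank F U = i) :
    Nat.card {X : Matrix (Fin (i + m)) (Fin (i + m)) F // Vinv X = U} =
      Fintype.card F ^ (i * m) * nilCard F m * Nat.card (GL (Fin i) F) := by
  rw [← univ_count]
  obtain ⟨e, he⟩ := exists_equiv U (Wst F i m) (by rw [hU, finrank_Wst])
  let Φ : Matrix (Fin (i + m)) (Fin (i + m)) F ≃ Matrix (Fin (i + m)) (Fin (i + m)) F :=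
    Matrix.toLinAlgEquiv'.toEquiv.trans
      (e.conjRingEquiv.toEquiv.trans Matrix.toLinAlgEquiv'.toEquiv.symm)
  refine Nat.card_congr (Φ.subtypeEquiv fun X => ?_)
  have h1 : Vinv (Φ X) = (Vinv X).map (e : (Fin (i + m) → F) →ₗ[F] (Fin (i + m) → F)) := by
    have h2 : (Φ X).mulVecLin = e.conjRingEquiv X.mulVecLin := by
      show Matrix.toLinAlgEquiv' (Matrix.toLinAlgEquiv'.symm (e.conjRingEquiv X.mulVecLin)) = _
      simp
    rw [Vinv, Vinv, h2, ← map_pow]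
    ext v
    constructor
    · rintro ⟨y, rfl⟩
      exact ⟨_, ⟨e.symm y, rfl⟩, rfl⟩
    · rintro ⟨_, ⟨y, rfl⟩, rfl⟩
      refine ⟨e y, ?_⟩
      show e ((X.mulVecLin ^ (i + m)) (e.symm (e y))) = _
      simp
  rw [h1, ← he]
  exact (Submodule.map_injective_of_injective e.injective).eq_iff.symm

lemma basis_count {F : Type*} [Field F] [Fintype F] {d i : ℕ} (U : Submodule F (Fin d → F))
    (hU : finrank F U = i) :
    Nat.card {b : Fin i → (Fin d → F) // LinearIndependent F b ∧
      Submodule.span F (Set.range b) = U} = Nat.card (GL (Fin i) F) := by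
  have h1 := card_linearIndependent (K := F) (V := U) (k := i) hU.ge
  rw [hU] at h1
  rw [Matrix.card_GL_field, ← h1]
  symm
  refine Nat.card_congr (Equiv.ofBijective (fun s => ⟨fun j => (s.1 j : Fin d → F), ?_, ?_⟩) ⟨?_, ?_⟩)
  · exact s.2.map' U.subtype U.ker_subtype
  · have hli : LinearIndependent F (fun j => (s.1 j : Fin d → F)) :=
      s.2.map' U.subtype U.ker_subtype
    apply Submodule.eq_of_le_of_finrank_eq
    · rw [Submodule.span_le]
      rintro _ ⟨j, rfl⟩
      exact (s.1 j).2
    · rw [finrank_span_eq_card hli, hU, Fintype.card_fin]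
  · intro s t h
    have h2 := congrArg Subtype.val h
    ext j : 2
    exact Subtype.ext (congrFun h2 j)
  · rintro ⟨b, hb, hs⟩
    have hm : ∀ j, b j ∈ U := fun j => hs ▸ Submodule.subset_span ⟨j, rfl⟩
    refine ⟨⟨fun j => ⟨b j, hm j⟩, ?_⟩, rfl⟩
    exact LinearIndependent.of_comp U.subtype hb

lemma double_count {F : Type*} [Field F] [Fintype F] (i m : ℕ) :
    Nat.card {X : Matrix (Fin (i + m)) (Fin (i + m)) F // finrank F (Vinv X) = i} =
      (∏ j : Fin i, (Fintype.card F ^ (i + m) - Fintype.card F ^ (j : ℕ))) *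
        (Fintype.card F ^ (i * m) * nilCard F m) := by
  have hG : 0 < Nat.card (GL (Fin i) F) := Nat.card_pos
  apply Nat.eq_of_mul_eq_mul_right hG
  let T := {p : Matrix (Fin (i + m)) (Fin (i + m)) F × (Fin i → (Fin (i + m) → F)) //
    LinearIndependent F p.2 ∧ Submodule.span F (Set.range p.2) = Vinv p.1}
  let e1 : T ≃ Σ X : {X : Matrix (Fin (i + m)) (Fin (i + m)) F // finrank F (Vinv X) = i},
      {b : Fin i → (Fin (i + m) → F) // LinearIndependent F b ∧
        Submodule.span F (Set.range b) = Vinv X.1} :=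
    { toFun := fun p => ⟨⟨p.1.1, by rw [← p.2.2, finrank_span_eq_card p.2.1, Fintype.card_fin]⟩,
        ⟨p.1.2, p.2⟩⟩
      invFun := fun p => ⟨(p.1.1, p.2.1), p.2.2⟩
      left_inv := fun p => rfl
      right_inv := fun p => rfl }
  let e2 : T ≃ Σ b : {b : Fin i → (Fin (i + m) → F) // LinearIndependent F b},
      {X : Matrix (Fin (i + m)) (Fin (i + m)) F // Vinv X = Submodule.span F (Set.range b.1)} :=
    { toFun := fun p => ⟨⟨p.1.2, p.2.1⟩, ⟨p.1.1, p.2.2.symm⟩⟩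
      invFun := fun p => ⟨(p.2.1, p.1.1), p.1.2, p.2.2.symm⟩
      left_inv := fun p => rfl
      right_inv := fun p => rfl }
  have c1 : Nat.card T = _ := Nat.card_congr e1
  have c2 : Nat.card T = _ := Nat.card_congr e2
  classical
  rw [Nat.card_sigma, Finset.sum_congr rfl (fun X _ => basis_count _ X.2), Finset.sum_const,
    Finset.card_univ, ← Nat.card_eq_fintype_card, smul_eq_mul] at c1
  rw [Nat.card_sigma, Finset.sum_congr rfl (fun b _ => conj_count _ (by
    rw [finrank_span_eq_card b.2, Fintype.card_fin])), Finset.sum_const,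
    Finset.card_univ, ← Nat.card_eq_fintype_card, smul_eq_mul,
    card_linearIndependent (by simp)] at c2
  rw [← c1, c2]
  simp [mul_assoc]

lemma total {F : Type*} [Field F] [Fintype F] (n : ℕ) :
    Fintype.card F ^ (n * n) = ∑ i ∈ Finset.range (n + 1),
      (∏ j ∈ Finset.range i, (Fintype.card F ^ n - Fintype.card F ^ j)) *
        (Fintype.card F ^ (i * (n - i)) * nilCard F (n - i)) := by
  have h0 : Fintype.card F ^ (n * n) = Nat.card (Matrix (Fin n) (Fin n) F) := by
    simp [Matrix, ← pow_mul]
  have h1 : Nat.card (Matrix (Fin n) (Fin n) F) = ∑ i ∈ Finset.range (n + 1),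
      Nat.card {X : Matrix (Fin n) (Fin n) F // finrank F (Vinv X) = i} := by
    classical
    have := Finset.card_eq_sum_card_fiberwise (s := (Finset.univ : Finset (Matrix (Fin n) (Fin n) F)))
      (t := Finset.range (n + 1)) (f := fun X => finrank F (Vinv X)) (by
        intro X _
        have := Submodule.finrank_le (Vinv X)
        simp at this ⊢
        omega)
    rw [Nat.card_eq_fintype_card, ← Finset.card_univ, this]
    refine Finset.sum_congr rfl fun i _ => ?_
    rw [Nat.card_eq_fintype_card, Fintype.card_subtype]
  rw [h0, h1]
  refine Finset.sum_congr rfl fun i hi => ?_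
  obtain ⟨m, rfl⟩ := Nat.exists_eq_add_of_le (Nat.lt_succ_iff.1 (Finset.mem_range.1 hi))
  rw [double_count, Nat.add_sub_cancel_left,
    Finset.prod_range (fun j => Fintype.card F ^ (i + m) - Fintype.card F ^ j)]

lemma telescope (q n : ℕ) (hq : 1 ≤ q) (k : ℕ) (hk : k ≤ n) :
    q ^ (n * n) = ∑ i ∈ Finset.range k, (∏ j ∈ Finset.range i, (q ^ n - q ^ j)) * q ^ ((n - i) * (n - 1))
      + (∏ j ∈ Finset.range k, (q ^ n - q ^ j)) * q ^ (n * (n - k)) := by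
  induction k with
  | zero => simp
  | succ k ih =>
    rw [ih (by omega), Finset.sum_range_succ, Finset.prod_range_succ, add_assoc, mul_assoc,
      ← mul_add]
    congr 2
    obtain ⟨m, rfl⟩ := Nat.exists_eq_add_of_le hk
    have e1 : k + 1 + m - k = m + 1 := by omega
    have e2 : k + 1 + m - 1 = k + m := by omega
    have e3 : k + 1 + m - (k + 1) = m := by omega
    rw [e1, e2, e3, Nat.sub_mul, ← pow_add, ← pow_add]
    have e4 : k + (k + 1 + m) * m = (m + 1) * (k + m) := by ring
    have e5 : k + 1 + m + (k + 1 + m) * m = (k + 1 + m) * (m + 1) := by ring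
    rw [e4, e5]
    have : q ^ ((m + 1) * (k + m)) ≤ q ^ ((k + 1 + m) * (m + 1)) :=
      Nat.pow_le_pow_right hq (by nlinarith)
    omega

lemma nil_count {F : Type*} [Field F] [Fintype F] (n : ℕ) :
    nilCard F n = Fintype.card F ^ (n * (n - 1)) := by
  induction n using Nat.strong_induction_on with
  | _ n ih =>
  have hq : 1 ≤ Fintype.card F := Fintype.card_pos
  have h1 := total (F := F) n
  have h2 := telescope (Fintype.card F) n hq n le_rfl
  have h3 : Fintype.card F ^ (n * n) = ∑ i ∈ Finset.range (n + 1),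
      (∏ j ∈ Finset.range i, (Fintype.card F ^ n - Fintype.card F ^ j)) *
        Fintype.card F ^ ((n - i) * (n - 1)) := by
    rw [Finset.sum_range_succ]
    simpa using h2
  rw [Finset.sum_range_succ'] at h1 h3
  have h4 : ∀ i ∈ Finset.range n,
      (∏ j ∈ Finset.range (i + 1), (Fintype.card F ^ n - Fintype.card F ^ j)) *
        (Fintype.card F ^ ((i + 1) * (n - (i + 1))) * nilCard F (n - (i + 1))) =
      (∏ j ∈ Finset.range (i + 1), (Fintype.card F ^ n - Fintype.card F ^ j)) *
        Fintype.card F ^ ((n - (i + 1)) * (n - 1)) := by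
    intro i hi
    rw [Finset.mem_range] at hi
    rw [ih _ (by omega), ← pow_add]
    congr 2
    obtain ⟨m, rfl⟩ := Nat.exists_eq_add_of_le hi
    have e1 : i + 1 + m - (i + 1) = m := by omega
    have e2 : i + 1 + m - 1 = i + m := by omega
    rw [Nat.succ_eq_add_one, e1, e2]
    rcases m with _ | m
    · simp
    · simp; ring
  rw [Finset.sum_congr rfl h4] at h1
  simp at h1 h3
  omega

theorem stmt4 (q d : ℕ) (hq : IsPrimePow q) (hd : 0 < d)
    (F : Type*) [Field F] [Fintype F] (hF : Fintype.card F = q)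
    (N : Set (Matrix (Fin d) (Fin d) F)) (hN : IsNI N) (i : ℕ) (hi : i ≤ d)
    (W : Submodule F (Fin d → F))
    (hW : W = Submodule.span F (Set.range fun j : Fin i => Pi.single (Fin.castLE hi j) (1 : F))) :
    Nat.card {X : Matrix (Fin d) (Fin d) F | X ∈ N ∧ Vinv X = W} =
      q ^ (i * (d - i)) * q ^ ((d - i) * (d - i - 1)) * Nat.card (NIsub N i) := by
  obtain ⟨m, rfl⟩ := Nat.exists_eq_add_of_le hi
  rw [span_eq_Wst] at hW
  subst hW hF
  rw [main_count N hN, nil_count, Nat.add_sub_cancel_left]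
end

section
/- Let N be a nilpotent-independent (NI) subset of M(d,q) and suppose there exist real constants a, k > 0 such that |N_i|/|GL(i,q)| \ge a - k/i for all 1 \le i \le d. Then |N|/|M(d,q)| \ge (a - 3k/d)(1 - q^{-d}) > a - (a + 3k)/d, where |M(d,q)| = q^{d^2}. -/
open Matrix Finset

namespace NIcount

variable {F : Type*} [Field F]

/-- Block diagonal matrix as a monoid homomorphism. -/
def D (F : Type*) [Field F] (i j : ℕ) :
    (Matrix (Fin i) (Fin i) F × Matrix (Fin j) (Fin j) F) →* Matrix (Fin (i + j)) (Fin (i + j)) F where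
  toFun p := Matrix.reindexAlgEquiv F F finSumFinEquiv (fromBlocks p.1 0 0 p.2)
  map_one' := by simp
  map_mul' p r := by
    rw [← map_mul, fromBlocks_multiply]; simp

lemma D_apply {i j : ℕ} (Y : Matrix (Fin i) (Fin i) F) (Z : Matrix (Fin j) (Fin j) F) :
    D F i j (Y, Z) = Matrix.reindexAlgEquiv F F finSumFinEquiv (fromBlocks Y 0 0 Z) := rfl

lemma D_add {i j : ℕ} (p r : Matrix (Fin i) (Fin i) F × Matrix (Fin j) (Fin j) F) :
    D F i j (p + r) = D F i j p + D F i j r := by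
  show Matrix.reindexAlgEquiv F F finSumFinEquiv _ = Matrix.reindexAlgEquiv F F finSumFinEquiv _ + Matrix.reindexAlgEquiv F F finSumFinEquiv _
  rw [← map_add, fromBlocks_add]; simp

lemma D_zero {i j : ℕ} : D F i j (0, 0) = 0 := by
  rw [D_apply]; simp

lemma D_inj {i j : ℕ} : Function.Injective (D F i j) := by
  rintro ⟨Y, Z⟩ ⟨Y', Z'⟩ h
  rw [D_apply, D_apply] at h
  have := (Matrix.reindexAlgEquiv F F finSumFinEquiv).injective h
  rw [fromBlocks_inj] at this
  simp [this.1, this.2.2.2]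

lemma embed_eq {i j : ℕ} (Y : Matrix (Fin i) (Fin i) F) :
    embedBlock (i + j) Y = D F i j (Y, 0) := by
  rw [D_apply]
  ext r c
  obtain ⟨r, rfl⟩ := finSumFinEquiv.surjective r
  obtain ⟨c, rfl⟩ := finSumFinEquiv.surjective c
  rcases r with r | r <;> rcases c with c | c <;> simp [embedBlock]

/-- Block diagonal units. -/
def U (F : Type*) [Field F] (i j : ℕ) (A : GL (Fin i) F) (B : GL (Fin j) F) : GL (Fin (i + j)) F :=
  Units.map (D F i j) (MulEquiv.prodUnits.symm (A, B))

lemma U_val {i j : ℕ} (A : GL (Fin i) F) (B : GL (Fin j) F) :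
    (U F i j A B : Matrix _ _ F) = D F i j (A, B) := rfl

lemma U_inv_val {i j : ℕ} (A : GL (Fin i) F) (B : GL (Fin j) F) :
    (((U F i j A B)⁻¹ : GL _ F) : Matrix _ _ F)
      = D F i j (((A⁻¹ : GL _ F) : Matrix _ _ F), ((B⁻¹ : GL _ F) : Matrix _ _ F)) := rfl

lemma nil_pow {j n : ℕ} (h : j ≤ n) {Z : Matrix (Fin j) (Fin j) F} (hZ : IsNilpotent Z) :
    Z ^ n = 0 := by
  obtain ⟨m, hm⟩ := hZ
  have h1 : (Matrix.toLinAlgEquiv' Z) ^ m = 0 := by rw [← map_pow, hm, map_zero]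
  have h2 := Module.End.ker_pow_le_ker_pow_finrank (Matrix.toLinAlgEquiv' Z) m
  rw [h1, ← map_pow] at h2
  have h3 : (Matrix.toLinAlgEquiv' (Z ^ j)) = 0 := by
    simpa [LinearMap.ker_eq_top] using h2
  have h4 : Z ^ j = 0 := Matrix.toLinAlgEquiv'.injective (h3.trans (map_zero _).symm)
  exact pow_eq_zero_of_le h h4

lemma mulVecLin_pow {n : ℕ} (X : Matrix (Fin n) (Fin n) F) (m : ℕ) :
    X.mulVecLin ^ m = (X ^ m).mulVecLin := by
  have := map_pow (Matrix.toLinAlgEquiv' : Matrix (Fin n) (Fin n) F ≃ₐ[F] _) X m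
  exact this.symm

lemma fitting {n : ℕ} (X : Matrix (Fin n) (Fin n) F) : IsCompl (Vinv X) (Vnil X) := by
  rw [Submodule.isCompl_iff_disjoint]
  · rw [Submodule.disjoint_def]
    rintro x ⟨v, rfl⟩ hx
    have h1 : v ∈ LinearMap.ker (X.mulVecLin ^ (n + n)) := by
      rw [pow_add]; exact hx
    have h2 := Module.End.ker_pow_eq_ker_pow_finrank_of_le (f := X.mulVecLin) (m := n + n) (by simp)
    rw [h2] at h1
    simpa using h1
  · exact (LinearMap.finrank_range_add_finrank_ker (X.mulVecLin ^ n)).ge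

lemma proj_D {i j : ℕ} (Y : GL (Fin i) F) {Z : Matrix (Fin j) (Fin j) F} (hZ : IsNilpotent Z) :
    fittingProj (D F i j (Y, Z)) = (D F i j (1, 0)).mulVecLin := by
  have hc := fitting (D F i j (Y, Z))
  unfold fittingProj
  rw [dif_pos hc]
  ext1 v
  ext1
  have e1 : D F i j (1, 0) + D F i j (0, 1) = 1 := by
    rw [← D_add, ← map_one (D F i j)]; simp only [Prod.mk_add_mk, add_zero, zero_add]; rfl
  have hZ' := nil_pow (n := i + j) (by omega) hZ
  generalize hw : (LinearMap.single F (fun _ : Fin (i+j) => F) v) 1 = w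
  have hv : w = D F i j (1, 0) *ᵥ w + D F i j (0, 1) *ᵥ w := by
    rw [← add_mulVec, e1, one_mulVec]
  have m1 : D F i j (1, 0) *ᵥ w ∈ Vinv (D F i j (Y, Z)) := by
    refine ⟨D F i j (((Y⁻¹ ^ (i + j) : GL _ F) : Matrix _ _ F), 0) *ᵥ w, ?_⟩
    rw [mulVecLin_pow, mulVecLin_apply, mulVec_mulVec, ← map_pow, ← map_mul]
    congr 2
    simp [← Units.val_pow_eq_pow_val, ← Units.val_mul]
  have m2 : D F i j (0, 1) *ᵥ w ∈ Vnil (D F i j (Y, Z)) := by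
    show _ = _
    rw [mulVecLin_pow, mulVecLin_apply, mulVec_mulVec, ← map_pow, ← map_mul]
    simp [hZ', D_zero]
  simp only [LinearMap.comp_apply, hw, mulVecLin_apply]
  conv_lhs => rw [hv]
  rw [map_add]
  have a1 : Submodule.linearProjOfIsCompl _ _ hc _ = _ := Submodule.projectionOnto_apply_left hc ⟨_, m1⟩
  have a2 : Submodule.linearProjOfIsCompl _ _ hc _ = _ := Submodule.projectionOnto_apply_right hc ⟨_, m2⟩
  simp only at a1 a2
  rw [a1, a2]
  simp

lemma conj_mem {n : ℕ} {N : Set (Matrix (Fin n) (Fin n) F)} (hN : IsNI N) (g : GL (Fin n) F)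
    (X : Matrix (Fin n) (Fin n) F) : (g : Matrix _ _ F) * X * ((g⁻¹ : GL _ F) : Matrix _ _ F) ∈ N ↔ X ∈ N := by
  constructor
  · intro h
    have := hN.1 _ h g
    simpa [mul_assoc, ← Units.val_mul] using this
  · intro h
    have := hN.1 _ h g⁻¹
    simpa using this

lemma D_mem {i j : ℕ} {N : Set (Matrix (Fin (i + j)) (Fin (i + j)) F)} (hN : IsNI N)
    (Y : GL (Fin i) F) {Z : Matrix (Fin j) (Fin j) F} (hZ : IsNilpotent Z) :
    D F i j (Y, Z) ∈ N ↔ Y ∈ NIsub N i := by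
  rw [hN.2, proj_D Y hZ, ← mulVecLin_mul, ← map_mul]
  unfold NIsub
  rw [Set.mem_setOf_eq, embed_eq]
  have : ((D F i j) (((Y : Matrix _ _ F), Z) * (1, 0))).mulVecLin = Matrix.toLin' ((D F i j) (((Y : Matrix _ _ F), Z) * (1, 0))) := rfl
  rw [this, LinearMap.toMatrix'_toLin']
  simp

lemma univ_NI {n : ℕ} : IsNI (Set.univ : Set (Matrix (Fin n) (Fin n) F)) := by
  constructor <;> simp

lemma rank_D {i j : ℕ} (g : GL (Fin (i + j)) F) (Y : GL (Fin i) F) {Z : Matrix (Fin j) (Fin j) F}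
    (hZ : IsNilpotent Z) :
    (((g : Matrix _ _ F) * D F i j (Y, Z) * ((g⁻¹ : GL _ F) : Matrix _ _ F)) ^ (i + j)).rank = i := by
  classical
  have h1 : ((g : Matrix _ _ F) * D F i j (Y, Z) * ((g⁻¹ : GL _ F) : Matrix _ _ F)) ^ (i + j)
     = ((g * U F i j (Y ^ (i + j)) 1 : GL (Fin (i+j)) F) : Matrix (Fin (i+j)) (Fin (i+j)) F) * D F i j (1, 0) * ((g⁻¹ : GL _ F) : Matrix _ _ F) := by
    rw [Units.conj_pow, Units.val_mul, U_val, ← map_pow, mul_assoc (g : Matrix _ _ F) (D F i j ((Y ^ (i + j) : GL _ F), _)), ← map_mul]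
    simp [nil_pow (n := i + j) (by omega) hZ]
  have hu : ∀ u : GL (Fin (i+j)) F, IsUnit (u : Matrix (Fin (i+j)) (Fin (i+j)) F).det := fun u => 
    (Matrix.isUnit_iff_isUnit_det (u : Matrix (Fin (i+j)) (Fin (i+j)) F)).1 u.isUnit
  rw [h1, rank_mul_eq_left_of_isUnit_det _ _ (hu _), rank_mul_eq_right_of_isUnit_det _ _ (hu _),
    D_apply, coe_reindexAlgEquiv, rank_reindex]
  have : (fromBlocks 1 0 0 0 : Matrix (Fin i ⊕ Fin j) (Fin i ⊕ Fin j) F) = diagonal (Sum.elim 1 0) := by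
    rw [← fromBlocks_diagonal]; simp
  rw [this, Matrix.rank_diagonal, ← Nat.card_eq_fintype_card]
  have e : {x : Fin i ⊕ Fin j // (Sum.elim 1 0 : Fin i ⊕ Fin j → F) x ≠ 0} ≃ Fin i := by
    refine (Equiv.ofBijective (fun k : Fin i => ⟨Sum.inl k, by simp⟩) ⟨?_, ?_⟩).symm
    · intro a b h; exact Sum.inl_injective (congrArg Subtype.val h)
    · rintro ⟨k | k, hk⟩
      · exact ⟨k, rfl⟩
      · simp at hk
  rw [Nat.card_congr e]; simp

lemma exists_form {i j : ℕ} (X : Matrix (Fin (i + j)) (Fin (i + j)) F)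
    (hX : (X ^ (i + j)).rank = i) :
    ∃ (g : GL (Fin (i + j)) F) (Y : GL (Fin i) F) (Z : Matrix (Fin j) (Fin j) F),
      IsNilpotent Z ∧ X = (g : Matrix _ _ F) * D F i j (Y, Z) * ((g⁻¹ : GL _ F) : Matrix _ _ F) := by
  classical
  have hc := fitting X
  have d1 : Module.finrank F (Vinv X) = i := by
    rw [Vinv, mulVecLin_pow]; exact hX
  have d2 : Module.finrank F (Vnil X) = j := by
    have := LinearMap.finrank_range_add_finrank_ker (X.mulVecLin ^ (i + j))
    have h2 : Module.finrank F (LinearMap.range (X.mulVecLin ^ (i + j))) = i := d1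
    rw [h2] at this
    simp only [Module.finrank_fintype_fun_eq_card, Fintype.card_fin, add_right_inj] at this
    exact this
  let b1 := Module.finBasisOfFinrankEq F (Vinv X) d1
  let b2 := Module.finBasisOfFinrankEq F (Vnil X) d2
  let b := (b1.prod b2).map (Submodule.prodEquivOfIsCompl _ _ hc)
  have bl : ∀ k, b (Sum.inl k) = b1 k := by intro k; simp [b]
  have br : ∀ k, b (Sum.inr k) = b2 k := by intro k; simp [b]
  have s1 : ∀ v ∈ Vinv X, X *ᵥ v ∈ Vinv X := by
    rintro _ ⟨w, rfl⟩
    refine ⟨X *ᵥ w, ?_⟩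
    simp only [mulVecLin_pow, mulVecLin_apply, mulVec_mulVec]
    rw [← pow_succ, ← pow_succ']
  have s2 : ∀ v ∈ Vnil X, X *ᵥ v ∈ Vnil X := by
    intro v hv
    have hv : (X.mulVecLin ^ (i + j)) v = 0 := hv
    show (X.mulVecLin ^ (i + j)) _ = 0
    simp only [mulVecLin_pow, mulVecLin_apply, mulVec_mulVec] at hv ⊢
    rw [← pow_succ, pow_succ', ← mulVec_mulVec, hv, mulVec_zero]
  have r1 : ∀ v ∈ Vinv X, ∀ k, b.repr v (Sum.inr k) = 0 := by
    intro v hv k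
    have := Submodule.prodEquivOfIsCompl_symm_apply_left _ _ hc ⟨v, hv⟩
    simp only at this
    simp [b, this]
  have r2 : ∀ v ∈ Vnil X, ∀ k, b.repr v (Sum.inl k) = 0 := by
    intro v hv k
    have := Submodule.prodEquivOfIsCompl_symm_apply_right _ _ hc ⟨v, hv⟩
    simp only at this
    simp [b, this]
  let M := LinearMap.toMatrix b b X.mulVecLin
  have hM : M = fromBlocks M.toBlocks₁₁ 0 0 M.toBlocks₂₂ := by
    conv_lhs => rw [← fromBlocks_toBlocks M]
    congr 1
    · ext r c
      simp only [M, toBlocks₁₂, of_apply, LinearMap.toMatrix_apply, br, mulVecLin_apply]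
      exact r2 _ (s2 _ (b2 c).2) _
    · ext r c
      simp only [M, toBlocks₂₁, of_apply, LinearMap.toMatrix_apply, bl, mulVecLin_apply]
      exact r1 _ (s1 _ (b1 c).2) _
  have hMn : M ^ (i + j) = LinearMap.toMatrix b b (X ^ (i + j)).mulVecLin := by
    rw [← mulVecLin_pow, LinearMap.toMatrix_pow]
  have hpow : ∀ m, M ^ m = fromBlocks (M.toBlocks₁₁ ^ m) 0 0 (M.toBlocks₂₂ ^ m) := by
    intro m
    induction m with
    | zero => simp
    | succ m ih =>
      rw [pow_succ, ih]
      conv_lhs => rw [hM]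
      rw [fromBlocks_multiply]; simp [pow_succ]
  have hnil : M.toBlocks₂₂ ^ (i + j) = 0 := by
    have h1 : M.toBlocks₂₂ ^ (i + j) = (M ^ (i + j)).toBlocks₂₂ := by rw [hpow]; simp
    rw [h1, hMn]
    ext r c
    simp only [toBlocks₂₂, of_apply, LinearMap.toMatrix_apply, br]
    have : (X.mulVecLin ^ (i + j)) (b2 c : Fin (i + j) → F) = 0 := (b2 c).2
    rw [mulVecLin_pow] at this
    rw [this]; simp
  have hrk : (M ^ (i + j)).rank = i := by
    rw [hMn, Matrix.rank_eq_finrank_range_toLin _ b b, Matrix.toLin_toMatrix]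
    exact hX
  have hrk2 : i ≤ (M.toBlocks₁₁ ^ (i + j)).rank := by
    have : M ^ (i + j) = (fromRows (1 : Matrix (Fin i) (Fin i) F) (0 : Matrix (Fin j) (Fin i) F)) * (M.toBlocks₁₁ ^ (i + j)) * (fromCols (1 : Matrix (Fin i) (Fin i) F) (0 : Matrix (Fin i) (Fin j) F)) := by
      rw [hpow, hnil, fromRows_mul, fromRows_mul_fromCols]; simp
    rw [this] at hrk
    calc i = _ := hrk.symm
      _ ≤ _ := (rank_mul_le_left _ _)
      _ ≤ _ := rank_mul_le_right _ _
  have hu : IsUnit (M.toBlocks₁₁ ^ (i + j)) := by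
    have hr : (M.toBlocks₁₁ ^ (i + j)).rank = Fintype.card (Fin i) :=
      le_antisymm (rank_le_card_width _) (by simpa using hrk2)
    rw [← Matrix.mulVec_surjective_iff_isUnit]
    have ht : LinearMap.range (M.toBlocks₁₁ ^ (i + j)).mulVecLin = ⊤ :=
      Submodule.eq_top_of_finrank_eq (by simpa [Matrix.rank] using hr)
    exact LinearMap.range_eq_top.1 ht
  have hu1 : IsUnit M.toBlocks₁₁ := by
    rcases Nat.eq_zero_or_pos (i + j) with h0 | h0
    · obtain rfl : i = 0 := by omega
      exact isUnit_of_subsingleton _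
    · exact (isUnit_pow_iff (by omega)).1 hu
  obtain ⟨Y, hY⟩ := hu1
  let b' := b.reindex finSumFinEquiv
  let s := Pi.basisFun F (Fin (i + j))
  refine ⟨⟨s.toMatrix b', b'.toMatrix s, s.toMatrix_mul_toMatrix_flip _, b'.toMatrix_mul_toMatrix_flip _⟩, Y, M.toBlocks₂₂, ⟨_, hnil⟩, ?_⟩
  have hD : D F i j (Y, M.toBlocks₂₂) = LinearMap.toMatrix b' b' X.mulVecLin := by
    rw [D_apply, hY, ← hM]
    ext r c
    simp [M, b', LinearMap.toMatrix_apply]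
  rw [hD]
  show X = s.toMatrix b' * LinearMap.toMatrix b' b' X.mulVecLin * b'.toMatrix s
  rw [basis_toMatrix_mul_linearMap_toMatrix_mul_basis_toMatrix]
  exact (LinearMap.toMatrix'_toLin' X).symm

lemma block_of_comm {i j : ℕ} (Y Y' : GL (Fin i) F) {Z Z' : Matrix (Fin j) (Fin j) F}
    (hZ : IsNilpotent Z) (hZ' : IsNilpotent Z') (h : GL (Fin (i + j)) F)
    (hh : D F i j (Y, Z) * (h : Matrix _ _ F) = (h : Matrix _ _ F) * D F i j (Y', Z')) :
    ∃ A B, h = U F i j A B := by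
  have hp : D F i j (Y, Z) ^ (i + j) * (h : Matrix _ _ F) = (h : Matrix _ _ F) * D F i j (Y', Z') ^ (i + j) := by
    have : SemiconjBy (h : Matrix _ _ F) (D F i j (Y', Z')) (D F i j (Y, Z)) := hh.symm
    exact (this.pow_right _).symm
  rw [← map_pow, ← map_pow] at hp
  simp only [Prod.pow_mk, nil_pow (n := i + j) (by omega) hZ, nil_pow (n := i + j) (by omega) hZ'] at hp
  obtain ⟨H, hH⟩ := (Matrix.reindexAlgEquiv F F (finSumFinEquiv (m := i) (n := j))).surjective (h : Matrix _ _ F)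
  rw [D_apply, D_apply, ← hH, ← map_mul, ← map_mul] at hp
  have hp := (Matrix.reindexAlgEquiv F F finSumFinEquiv).injective hp
  rw [← fromBlocks_toBlocks H, fromBlocks_multiply, fromBlocks_multiply, fromBlocks_inj] at hp
  obtain ⟨-, h12, h21, -⟩ := hp
  simp only [Matrix.zero_mul, Matrix.mul_zero, add_zero, zero_add, ← Units.val_pow_eq_pow_val] at h12 h21
  have h12 : H.toBlocks₁₂ = 0 := by
    have := congrArg (fun m => (((Y ^ (i + j))⁻¹ : GL (Fin i) F) : Matrix (Fin i) (Fin i) F) * m) h12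
    simpa only [← Matrix.mul_assoc, ← Units.val_mul, inv_mul_cancel, Units.val_one, Matrix.one_mul, Matrix.mul_zero] using this
  have h21 : H.toBlocks₂₁ = 0 := by
    have := congrArg (fun m => m * (((Y' ^ (i + j))⁻¹ : GL (Fin i) F) : Matrix (Fin i) (Fin i) F)) h21
    simpa only [Matrix.mul_assoc, ← Units.val_mul, mul_inv_cancel, Units.val_one, Matrix.mul_one, Matrix.zero_mul, eq_comm] using this
  have hHu : IsUnit H := by
    have := h.isUnit
    rw [← hH] at this
    exact (MulEquiv.isUnit_map (Matrix.reindexAlgEquiv F F (finSumFinEquiv (m := i) (n := j)))).1 this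
  have hHe : H = fromBlocks H.toBlocks₁₁ 0 0 H.toBlocks₂₂ := by
    conv_lhs => rw [← fromBlocks_toBlocks H, h12, h21]
  rw [hHe, isUnit_fromBlocks_zero₁₂] at hHu
  obtain ⟨⟨A, hA⟩, ⟨B, hB⟩⟩ := hHu
  refine ⟨A, B, Units.ext ?_⟩
  rw [U_val, D_apply, hA, hB, ← hHe, hH]

lemma count {i j : ℕ} [Fintype F] {N : Set (Matrix (Fin (i + j)) (Fin (i + j)) F)} (hN : IsNI N) :
    Nat.card {X // X ∈ N ∧ (X ^ (i + j)).rank = i} * (Nat.card (GL (Fin i) F) * Nat.card (GL (Fin j) F))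
      = Nat.card (GL (Fin (i + j)) F) * (Nat.card (NIsub N i) *
          Nat.card {Z : Matrix (Fin j) (Fin j) F // IsNilpotent Z}) := by
  choose g Y Z hZ hX using fun X : {X // X ∈ N ∧ (X ^ (i + j)).rank = i} => exists_form X.1 X.2.2
  rw [← Nat.card_prod, ← Nat.card_prod, ← Nat.card_prod, ← Nat.card_prod]
  have hYm : ∀ X, Y X ∈ NIsub N i := by
    intro X
    have := X.2.1
    rw [hX X, conj_mem hN, D_mem hN _ (hZ X)] at this
    exact this
  have cZ : ∀ {Z : Matrix (Fin j) (Fin j) F} (B : GL (Fin j) F), IsNilpotent Z →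
      IsNilpotent ((((B⁻¹ : GL _ F) : Matrix _ _ F)) * Z * (B : Matrix _ _ F)) := by
    rintro Z B ⟨m, hm⟩
    refine ⟨m, ?_⟩
    rw [Units.conj_pow', hm]; simp
  have key : ∀ (A : GL (Fin i) F) (B : GL (Fin j) F) (Y : GL (Fin i) F) (Z : Matrix (Fin j) (Fin j) F),
      D F i j ((A⁻¹ * Y * A : GL _ F), (((B⁻¹ : GL _ F) : Matrix _ _ F)) * Z * (B : Matrix _ _ F))
        = (((U F i j A B)⁻¹ : GL _ F) : Matrix _ _ F) * D F i j (Y, Z) * (U F i j A B : Matrix _ _ F) := by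
    intro A B Y Z
    rw [U_val, U_inv_val, ← map_mul, ← map_mul]
    rfl
  have hYm' : ∀ X (A : GL (Fin i) F), A⁻¹ * Y X * A ∈ NIsub N i := by
    intro X A
    rw [← D_mem hN _ (cZ 1 (hZ X)), key]
    have := conj_mem hN (U F i j A 1)⁻¹ (D F i j (Y X, Z X))
    rw [inv_inv] at this
    rw [this, D_mem hN _ (hZ X)]
    exact hYm X
  let f : {X // X ∈ N ∧ (X ^ (i + j)).rank = i} × (GL (Fin i) F × GL (Fin j) F) →
      GL (Fin (i + j)) F × (NIsub N i × {Z : Matrix (Fin j) (Fin j) F // IsNilpotent Z}) :=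
    fun p => (g p.1 * U F i j p.2.1 p.2.2, (⟨p.2.1⁻¹ * Y p.1 * p.2.1, hYm' _ _⟩, ⟨_, cZ p.2.2 (hZ p.1)⟩))
  have hf : ∀ p, ((f p).1 : Matrix _ _ F) * D F i j ((((f p).2.1 : GL (Fin i) F) : Matrix (Fin i) (Fin i) F), ((f p).2.2 : Matrix (Fin j) (Fin j) F)) * (((f p).1⁻¹ : GL (Fin (i+j)) F) : Matrix (Fin (i+j)) (Fin (i+j)) F) = (p.1 : Matrix (Fin (i+j)) (Fin (i+j)) F) := by
    rintro ⟨X, A, B⟩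
    simp only [f]
    rw [key]
    conv_rhs => rw [hX X]
    simp only [Units.val_mul, _root_.mul_inv_rev, mul_assoc, Units.mul_inv_cancel_left]
  refine Nat.card_congr (Equiv.ofBijective f ⟨?_, ?_⟩)
  · rintro ⟨X, A, B⟩ ⟨X', A', B'⟩ h
    have h1 : X = X' := by
      apply Subtype.ext
      have e1 := hf (X, A, B)
      have e2 := hf (X', A', B')
      rw [h] at e1
      exact e1.symm.trans e2
    subst h1
    have h2 : g X * U F i j A B = g X * U F i j A' B' := congrArg Prod.fst h
    have h3 := congrArg Units.val (mul_left_cancel h2)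
    rw [U_val, U_val] at h3
    have h4 := D_inj h3
    simp only [Prod.mk.injEq] at h4
    rw [Units.ext h4.1, Units.ext h4.2]
  · rintro ⟨g', ⟨Y', hY'⟩, ⟨Z', hZ'⟩⟩
    have hm : (g' : Matrix _ _ F) * D F i j (Y', Z') * ((g'⁻¹ : GL _ F) : Matrix _ _ F) ∈ N :=
      (conj_mem hN _ _).2 ((D_mem hN _ hZ').2 hY')
    obtain ⟨X, hXe⟩ : ∃ X : {X // X ∈ N ∧ (X ^ (i + j)).rank = i}, X.1 =
      (g' : Matrix _ _ F) * D F i j (Y', Z') * ((g'⁻¹ : GL _ F) : Matrix _ _ F) :=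
        ⟨⟨_, hm, rank_D g' Y' hZ'⟩, rfl⟩
    have e := hXe.symm.trans (hX X)
    have e2 : D F i j (Y X, Z X) * (((g X)⁻¹ * g' : GL _ F) : Matrix _ _ F) = (((g X)⁻¹ * g' : GL _ F) : Matrix _ _ F) * D F i j (Y', Z') := by
      have := congrArg (fun m => (((g X)⁻¹ : GL _ F) : Matrix _ _ F) * m * (g' : Matrix _ _ F)) e
      simp only [mul_assoc, Units.inv_mul_cancel_left, Units.inv_mul, mul_one] at this
      rw [Units.val_mul, mul_assoc, ← this]
    obtain ⟨A, B, hAB⟩ := block_of_comm _ _ (hZ X) hZ' _ e2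
    refine ⟨(X, A, B), ?_⟩
    have e3 : D F i j ((A⁻¹ * Y X * A : GL _ F), (((B⁻¹ : GL _ F) : Matrix _ _ F)) * Z X * (B : Matrix _ _ F)) = D F i j (Y', Z') := by
      rw [key, ← hAB, mul_assoc, e2, Units.inv_mul_cancel_left]
    have e4 := D_inj e3
    simp only [Prod.mk.injEq] at e4
    refine Prod.ext ?_ (Prod.ext (Subtype.ext ?_) (Subtype.ext ?_))
    · simp only [f]; rw [← hAB]; simp
    · exact Units.ext e4.1
    · exact e4.2

end NIcount
namespace NIcount

/-- `ω n = ∏_{m=1}^n (1 - x^m)`. -/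
noncomputable def om (x : ℝ) (n : ℕ) : ℝ := ∏ m ∈ Finset.range n, (1 - x ^ (m + 1))

lemma om_succ (x : ℝ) (n : ℕ) : om x (n + 1) = om x n * (1 - x ^ (n + 1)) := by
  unfold om; rw [Finset.prod_range_succ]

lemma om_fac {x : ℝ} (h0 : 0 < x) (h1 : x ≤ 1 / 2) (n : ℕ) : 0 < 1 - x ^ (n + 1) := by
  have : x ^ (n + 1) < 1 := pow_lt_one₀ h0.le (by linarith) (by omega)
  linarith

lemma om_pos {x : ℝ} (h0 : 0 < x) (h1 : x ≤ 1 / 2) (n : ℕ) : 0 < om x n := Finset.prod_pos fun m _ => om_fac h0 h1 m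

lemma om_anti {x : ℝ} (h0 : 0 < x) (h1 : x ≤ 1 / 2) : Antitone (om x) := antitone_nat_of_succ_le fun n => by
  rw [om_succ]
  have := om_pos h0 h1 n
  have : 0 < x ^ (n + 1) := by positivity
  nlinarith

lemma f_eq {x : ℝ} (h0 : 0 < x) (h1 : x ≤ 1 / 2) {f : ℕ → ℝ} (hf : ∀ n, 1 / om x n = ∑ j ∈ Finset.range (n + 1), f j) (j : ℕ) :
    f j = x ^ j / om x j := by
  cases j with
  | zero => simpa [om] using (hf 0).symm
  | succ j =>
    have a := hf (j + 1)
    rw [Finset.sum_range_succ, ← hf j] at a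
    have : f (j + 1) = 1 / om x (j + 1) - 1 / om x j := by linarith
    rw [this, om_succ]
    have := (om_pos h0 h1 j).ne'
    have := (om_fac h0 h1 j).ne'
    field_simp
    ring

lemma numeric {x : ℝ} (h0 : 0 < x) (h1 : x ≤ 1 / 2) {f : ℕ → ℝ} (hf : ∀ n, 1 / om x n = ∑ j ∈ Finset.range (n + 1), f j)
    {d : ℕ} (hd : 0 < d) {a k : ℝ} (hk : 0 < k) (r : ℕ → ℝ) (hr0 : 0 ≤ r 0)
    (hr : ∀ i, 1 ≤ i → i ≤ d → a - k / (i : ℝ) ≤ r i) :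
    (a - 3 * k / (d : ℝ)) * (1 - x ^ d) ≤
      om x d * ∑ j ∈ Finset.range (d + 1), r (d - j) * f j := by
  have hfe := f_eq h0 h1 hf
  have hfp : ∀ j, 0 ≤ f j := fun j => by
    rw [hfe]; have := om_pos h0 h1 j; positivity
  have hod := om_pos h0 h1 d
  have hd' : (0 : ℝ) < d := by exact_mod_cast hd
  have tot : ∑ j ∈ Finset.range d, om x d * f j = 1 - x ^ d := by
    have := hf d
    rw [Finset.sum_range_succ, hfe d] at this
    rw [← Finset.mul_sum]
    have h2 : ∑ j ∈ Finset.range d, f j = 1 / om x d - x ^ d / om x d := by linarith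
    rw [h2]; field_simp
  have hc : 0 ≤ 1 - x ^ d := by
    rw [← tot]; exact Finset.sum_nonneg fun j _ => mul_nonneg hod.le (hfp j)
  have hP : ∀ j ∈ Finset.range d, om x d * f j ≤ (1 / 2) ^ j * (1 - x ^ d) := by
    intro j hj
    obtain ⟨e, rfl⟩ : ∃ e, d = e + 1 := ⟨d - 1, by omega⟩
    have hj' : j ≤ e := by simpa [Nat.lt_succ_iff] using hj
    rw [hfe, om_succ]
    have A := om_anti h0 h1 hj'
    have B := om_pos h0 h1 j
    have C : x ^ j ≤ (1 / 2) ^ j := pow_le_pow_left₀ h0.le h1 j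
    have E : om x e / om x j ≤ 1 := (div_le_one B).2 A
    have E0 : 0 ≤ om x e / om x j := div_nonneg (om_pos h0 h1 e).le B.le
    calc om x e * (1 - x ^ (e + 1)) * (x ^ j / om x j)
        = (om x e / om x j) * x ^ j * (1 - x ^ (e + 1)) := by ring
      _ ≤ 1 * (1 / 2) ^ j * (1 - x ^ (e + 1)) := by gcongr
      _ = _ := by ring
  have geo : ∀ n : ℕ, ∑ j ∈ Finset.range n, (j : ℝ) * (1 / 2) ^ j = 2 - 2 * (n + 1) * (1 / 2) ^ n := by
    intro n
    induction n with
    | zero => simp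
    | succ n ih => rw [Finset.sum_range_succ, ih]; push_cast; ring
  have S2 : ∑ j ∈ Finset.range d, (j : ℝ) * (om x d * f j) ≤ 2 * (1 - x ^ d) := by
    calc _ ≤ ∑ j ∈ Finset.range d, (j : ℝ) * ((1 / 2) ^ j * (1 - x ^ d)) := by
            refine Finset.sum_le_sum fun j hj => ?_
            exact mul_le_mul_of_nonneg_left (hP j hj) (by positivity)
      _ = (∑ j ∈ Finset.range d, (j : ℝ) * (1 / 2) ^ j) * (1 - x ^ d) := by
            rw [Finset.sum_mul]; refine Finset.sum_congr rfl fun j _ => by ring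
      _ ≤ _ := by
            refine mul_le_mul_of_nonneg_right ?_ hc
            rw [geo]
            have : (0 : ℝ) ≤ 2 * (d + 1) * (1 / 2) ^ d := by positivity
            linarith
  have low : ∀ j ∈ Finset.range d, (a - k / d * (1 + j)) * (om x d * f j) ≤ r (d - j) * (om x d * f j) := by
    intro j hj
    have hj : j < d := by simpa using hj
    refine mul_le_mul_of_nonneg_right ?_ (mul_nonneg hod.le (hfp j))
    refine le_trans ?_ (hr (d - j) (by omega) (by omega))
    have c : ((d - j : ℕ) : ℝ) = (d : ℝ) - j := by rw [Nat.cast_sub hj.le]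
    rw [c]
    have hj1 : (1 : ℝ) ≤ (d : ℝ) - j := by
      have : (j : ℝ) + 1 ≤ d := by exact_mod_cast hj
      linarith
    have : k / ((d : ℝ) - j) ≤ k / d * (1 + j) := by
      rw [div_mul_eq_mul_div, div_le_div_iff₀ (by linarith) hd', mul_assoc]
      refine mul_le_mul_of_nonneg_left ?_ hk.le
      have : (0 : ℝ) ≤ j := by positivity
      nlinarith
    linarith
  calc (a - 3 * k / (d : ℝ)) * (1 - x ^ d)
      = (a - k / d) * (1 - x ^ d) - k / d * (2 * (1 - x ^ d)) := by ring
    _ ≤ (a - k / d) * (1 - x ^ d) - k / d * ∑ j ∈ Finset.range d, (j : ℝ) * (om x d * f j) := by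
        have : 0 ≤ k / d := by positivity
        gcongr
    _ = ∑ j ∈ Finset.range d, (a - k / d * (1 + j)) * (om x d * f j) := by
        rw [← tot, Finset.mul_sum, Finset.mul_sum, ← Finset.sum_sub_distrib]
        refine Finset.sum_congr rfl fun j _ => by ring
    _ ≤ ∑ j ∈ Finset.range d, r (d - j) * (om x d * f j) := Finset.sum_le_sum low
    _ ≤ om x d * ∑ j ∈ Finset.range (d + 1), r (d - j) * f j := by
        rw [Finset.sum_range_succ, mul_add, Finset.mul_sum, Nat.sub_self]
        have : 0 ≤ om x d * (r 0 * f d) := mul_nonneg hod.le (mul_nonneg hr0 (hfp d))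
        have e : ∑ j ∈ Finset.range d, r (d - j) * (om x d * f j) = ∑ j ∈ Finset.range d, om x d * (r (d - j) * f j) :=
          Finset.sum_congr rfl fun j _ => by ring
        linarith

lemma card_GL_om (F : Type*) [Field F] [Fintype F] (n : ℕ) :
    (Nat.card (GL (Fin n) F) : ℝ) = (Fintype.card F : ℝ) ^ (n ^ 2) * om ((Fintype.card F : ℝ)⁻¹) n := by
  have hq : (0 : ℝ) < Fintype.card F := by exact_mod_cast Fintype.card_pos
  have hq1 : 1 ≤ Fintype.card F := Fintype.card_pos
  rw [Matrix.card_GL_field, Fin.prod_univ_eq_prod_range (fun m => Fintype.card F ^ n - Fintype.card F ^ m) n,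
    Nat.cast_prod, om, ← Finset.prod_range_reflect (fun m => (1 - ((Fintype.card F : ℝ)⁻¹) ^ (m + 1)))]
  have : (Fintype.card F : ℝ) ^ (n ^ 2) = ∏ m ∈ Finset.range n, (Fintype.card F : ℝ) ^ n := by
    rw [Finset.prod_const, Finset.card_range, ← pow_mul, sq]
  rw [this, ← Finset.prod_mul_distrib]
  refine Finset.prod_congr rfl fun m hm => ?_
  have hm : m < n := by simpa using hm
  rw [Nat.cast_sub (Nat.pow_le_pow_right hq1 hm.le)]
  push_cast
  obtain ⟨t, rfl⟩ : ∃ t, n = m + 1 + t := ⟨n - (m + 1), by omega⟩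
  have : m + 1 + t - 1 - m + 1 = t + 1 := by omega
  rw [this, mul_sub, mul_one, inv_pow, show m + 1 + t = m + (t + 1) by ring, pow_add _ m (t + 1)]
  field_simp

/-- Ratio of nilpotent matrices to invertible ones. -/
noncomputable def fnil (F : Type*) [Field F] (j : ℕ) : ℝ :=
  (Nat.card {Z : Matrix (Fin j) (Fin j) F // IsNilpotent Z} : ℝ) / Nat.card (GL (Fin j) F)

lemma total {F : Type*} [Field F] [Fintype F] {n : ℕ} {N : Set (Matrix (Fin n) (Fin n) F)} (hN : IsNI N) :
    (Nat.card N : ℝ) / Nat.card (GL (Fin n) F) =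
      ∑ j ∈ Finset.range (n + 1),
        ((Nat.card (NIsub N (n - j)) : ℝ) / Nat.card (GL (Fin (n - j)) F)) * fnil F j := by
  classical
  have h1 : Nat.card N = ∑ i ∈ Finset.range (n + 1), Nat.card {X // X ∈ N ∧ (X ^ n).rank = i} := by
    have := Finset.card_eq_sum_card_fiberwise (s := Finset.univ.filter (· ∈ N))
      (t := Finset.range (n + 1)) (f := fun X => (X ^ n).rank) (by
        intro X _
        have := Matrix.rank_le_width (X ^ n)
        simp only [Finset.coe_range, Set.mem_Iio]; omega)
    rw [Nat.card_eq_fintype_card, Fintype.card_subtype]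
    rw [this]
    refine Finset.sum_congr rfl fun i _ => ?_
    rw [Nat.card_eq_fintype_card, Fintype.card_subtype, Finset.filter_filter]
  rw [h1, ← Finset.sum_range_reflect]
  push_cast
  rw [Finset.sum_div]
  refine Finset.sum_congr rfl fun j hj => ?_
  have hj : j ≤ n := by simpa [Nat.lt_succ_iff] using hj
  obtain ⟨i, rfl⟩ : ∃ i, n = i + j := ⟨n - j, by omega⟩
  simp only [Nat.add_sub_cancel]
  have e2 : i + j - j = i := by omega
  rw [e2, fnil]
  have pos : ∀ m, (Nat.card (GL (Fin m) F) : ℝ) ≠ 0 := fun m => by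
    exact_mod_cast Nat.card_pos.ne'
  have := congrArg (Nat.cast : ℕ → ℝ) (count (i := i) (j := j) hN)
  push_cast at this
  have p1 := pos i
  have p2 := pos j
  have p3 := pos (i + j)
  rw [div_mul_div_comm, div_eq_div_iff p3 (mul_ne_zero p1 p2), this]
  ring

lemma fnil_sum (F : Type*) [Field F] [Fintype F] (n : ℕ) :
    1 / om ((Fintype.card F : ℝ)⁻¹) n = ∑ j ∈ Finset.range (n + 1), fnil F j := by
  have h := total (F := F) (n := n) univ_NI
  have hq : (0 : ℝ) < Fintype.card F := by exact_mod_cast Fintype.card_pos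
  have e : Nat.card (Set.univ : Set (Matrix (Fin n) (Fin n) F)) = Fintype.card F ^ (n ^ 2) := by
    rw [Nat.card_congr (Equiv.Set.univ _)]
    unfold Matrix
    rw [Nat.card_fun, Nat.card_fun, ← pow_mul]
    simp [sq]
  rw [e, card_GL_om] at h
  push_cast at h
  rw [div_mul_eq_div_div, div_self (by positivity)] at h
  rw [h]
  refine Finset.sum_congr rfl fun j _ => ?_
  have : (Nat.card (NIsub (Set.univ : Set (Matrix (Fin n) (Fin n) F)) (n - j))) = Nat.card (GL (Fin (n - j)) F) := by
    have : NIsub (Set.univ : Set (Matrix (Fin n) (Fin n) F)) (n - j) = Set.univ := by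
      ext; simp [NIsub]
    rw [this, Nat.card_congr (Equiv.Set.univ _)]
  rw [this, div_self (by exact_mod_cast Nat.card_pos.ne'), one_mul]

end NIcount

theorem stmt8 (q d : ℕ) (hq : IsPrimePow q) (hd : 0 < d)
    (F : Type*) [Field F] [Fintype F] (hF : Fintype.card F = q)
    (N : Set (Matrix (Fin d) (Fin d) F)) (hN : IsNI N) (a k : ℝ) (ha : 0 < a) (hk : 0 < k)
    (hbound : ∀ i : ℕ, 1 ≤ i → i ≤ d →
      a - k / (i : ℝ) ≤ (Nat.card (NIsub N i) : ℝ) / Nat.card (GL (Fin i) F)) :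
    (a - 3 * k / (d : ℝ)) * (1 - ((q : ℝ))⁻¹ ^ d) ≤ (Nat.card N : ℝ) / (q : ℝ) ^ (d ^ 2) ∧
      a - (a + 3 * k) / (d : ℝ) < (a - 3 * k / (d : ℝ)) * (1 - ((q : ℝ))⁻¹ ^ d) := by
  subst hF
  have hq2 : (2 : ℝ) ≤ Fintype.card F := by exact_mod_cast hq.two_le
  have hx0 : (0 : ℝ) < (Fintype.card F : ℝ)⁻¹ := by positivity
  have hx1 : (Fintype.card F : ℝ)⁻¹ ≤ 1 / 2 := by
    rw [one_div]; exact inv_anti₀ (by norm_num) hq2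
  have hd' : (0 : ℝ) < d := by exact_mod_cast hd
  constructor
  · refine (NIcount.numeric hx0 hx1 (NIcount.fnil_sum F) hd hk
      (fun i => (Nat.card (NIsub N i) : ℝ) / Nat.card (GL (Fin i) F)) (by positivity) hbound).trans ?_
    rw [← NIcount.total hN, NIcount.card_GL_om]
    have := NIcount.om_pos hx0 hx1 d
    refine le_of_eq ?_
    generalize NIcount.om ((Fintype.card F : ℝ)⁻¹) d = w at *
    field_simp
  · have h1 : ((Fintype.card F : ℝ)⁻¹) ^ d < 1 / d := by
      calc ((Fintype.card F : ℝ)⁻¹) ^ d ≤ (1 / 2) ^ d := pow_le_pow_left₀ hx0.le hx1 d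
        _ = 1 / 2 ^ d := by rw [_root_.one_div_pow]
        _ < 1 / d := by
          apply one_div_lt_one_div_of_lt hd'
          exact_mod_cast Nat.lt_two_pow_self
    have h2 : 0 < ((Fintype.card F : ℝ)⁻¹) ^ d := by positivity
    have h3 : a * ((Fintype.card F : ℝ)⁻¹) ^ d < a * (1 / d) := mul_lt_mul_of_pos_left h1 ha
    have h4 : 0 < 3 * k / d * ((Fintype.card F : ℝ)⁻¹) ^ d := by positivity
    have h5 : (a + 3 * k) / (d : ℝ) = a * (1 / d) + 3 * k / d := by ring
    rw [h5]
    nlinarith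
end
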